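/- arXiv:1504.01148 — 2 statements merged into one kernel-verified Lean document; each statement's English description precedes it below -/
import Mathlib

section
/- Let (R, m) be a commutative Noetherian local ring and M an R-module of Krull dimension n such that H^n_m(M) is nonzero and Artinian, and let I be an ideal of R such that dim(R/(I + Ann M)) = 1, where Ann M is the annihilator of M. Then the top local cohomology module H^{cd(I,M)}_I(M) is an Artinian R-module if and only if cd(I,M) = n. -/
universe u

open CategoryTheory

/-- The cohomological dimension of `M` with respect to `I`:
`cd(I,M) = sup { i ∈ ℕ | H^i_I(M) ≠ 0 }`, as an element of `ℕ∞`. -/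
noncomputable def cohomologicalDimension {R : Type u} [CommRing R] (I : Ideal R)
    (M : ModuleCat.{u} R) : ℕ∞ :=
  sSup {c : ℕ∞ | ∃ i : ℕ, c = i ∧ Nontrivial ((localCohomology I i).obj M)}

section LeftDerivedConnecting

open Limits HomologicalComplex

variable {C D : Type*} [Category* C] [Category* D] [Abelian C] [Abelian D]
  {F G H : C ⥤ D} [F.Additive] [G.Additive] [H.Additive] (α : F ⟶ G) (β : G ⟶ H) (w : α ≫ β = 0)

/-- The sequence of complexes obtained by applying a complex of functors to a complex. -/
noncomputable def mapComplexShortComplex (K : ChainComplex C ℕ) :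
    ShortComplex (ChainComplex D ℕ) :=
  ShortComplex.mk ((NatTrans.mapHomologicalComplex α _).app K)
    ((NatTrans.mapHomologicalComplex β _).app K) (by
      ext n
      exact congr_app w (K.X n))

/-- Functoriality of `mapComplexShortComplex`. -/
noncomputable def mapComplexShortComplexMap {K L : ChainComplex C ℕ} (φ : K ⟶ L) :
    mapComplexShortComplex α β w K ⟶ mapComplexShortComplex α β w L where
  τ₁ := (F.mapHomologicalComplex _).map φ
  τ₂ := (G.mapHomologicalComplex _).map φ
  τ₃ := (H.mapHomologicalComplex _).map φ
  comm₁₂ := ((NatTrans.mapHomologicalComplex α _).naturality φ)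
  comm₂₃ := ((NatTrans.mapHomologicalComplex β _).naturality φ)

lemma mapComplexShortComplex_shortExact (h : ∀ P : C, Projective P →
    (ShortComplex.mk (α.app P) (β.app P) (congr_app w P)).ShortExact)
    {A : C} (P : ProjectiveResolution A) :
    (mapComplexShortComplex α β w P.complex).ShortExact :=
  shortExact_of_degreewise_shortExact _ fun n => h _ (P.projective n)

variable (h : ∀ P : C, Projective P →
  (ShortComplex.mk (α.app P) (β.app P) (congr_app w P)).ShortExact)

/-- The connecting homomorphism in homology for a projective resolution. -/
noncomputable def resolutionConnecting {A : C} (P : ProjectiveResolution A) (n : ℕ) :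
    (homologyFunctor D _ (n + 1)).obj ((H.mapHomologicalComplex _).obj P.complex) ⟶
      (homologyFunctor D _ n).obj ((F.mapHomologicalComplex _).obj P.complex) :=
  (mapComplexShortComplex_shortExact α β w h P).δ (n + 1) n (by simp)

lemma resolutionConnecting_naturality {A B : C} (P : ProjectiveResolution A)
    (Q : ProjectiveResolution B) (φ : P.complex ⟶ Q.complex) (n : ℕ) :
    (H.mapHomologicalComplex _ ⋙ homologyFunctor D _ (n + 1)).map φ ≫
        resolutionConnecting α β w h Q n =
      resolutionConnecting α β w h P n ≫
        (F.mapHomologicalComplex _ ⋙ homologyFunctor D _ n).map φ :=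
  (HomologySequence.δ_naturality (mapComplexShortComplexMap α β w φ)
    (mapComplexShortComplex_shortExact α β w h P)
    (mapComplexShortComplex_shortExact α β w h Q) (n + 1) n (by simp)).symm

lemma resolutionConnecting_comp {A : C} (P : ProjectiveResolution A) (n : ℕ) :
    resolutionConnecting α β w h P n ≫ (homologyFunctor D _ n).map
      ((NatTrans.mapHomologicalComplex α _).app P.complex) = 0 :=
  (mapComplexShortComplex_shortExact α β w h P).δ_comp (n + 1) n (by simp)

lemma resolutionConnecting_exact {A : C} (P : ProjectiveResolution A) (n : ℕ) :
    (ShortComplex.mk _ _ (resolutionConnecting_comp α β w h P n)).Exact :=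
  (mapComplexShortComplex_shortExact α β w h P).homology_exact₁ (n + 1) n (by simp)

lemma resolutionConnecting_mono {A : C} (P : ProjectiveResolution A) (n : ℕ)
    (hG : IsZero ((homologyFunctor D _ (n + 1)).obj
      ((G.mapHomologicalComplex _).obj P.complex))) :
    Mono (resolutionConnecting α β w h P n) :=
  (mapComplexShortComplex_shortExact α β w h P).mono_δ (n + 1) n (by simp) hG

variable [HasProjectiveResolutions C]

/-- The connecting homomorphism between left derived functors induced by a sequence of functors
that is short exact on projective objects. -/
noncomputable def leftDerivedConnecting (n : ℕ) : H.leftDerived (n + 1) ⟶ F.leftDerived n where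
  app A := ((projectiveResolution A).isoLeftDerivedObj H (n + 1)).hom ≫
    resolutionConnecting α β w h (projectiveResolution A) n ≫
    ((projectiveResolution A).isoLeftDerivedObj F n).inv
  naturality A B f := by
    have comm := ProjectiveResolution.lift_commutes_zero f (projectiveResolution A)
      (projectiveResolution B)
    rw [ProjectiveResolution.isoLeftDerivedObj_hom_naturality_assoc f _ _ _ comm,
      reassoc_of% resolutionConnecting_naturality α β w h, Category.assoc, Category.assoc,
      ProjectiveResolution.isoLeftDerivedObj_inv_naturality f _ _ _ comm]
    rfl

lemma leftDerivedConnecting_mono (n : ℕ) (A : C) (hG : IsZero ((G.leftDerived (n + 1)).obj A)) :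
    Mono ((leftDerivedConnecting α β w h n).app A) := by
  have := resolutionConnecting_mono α β w h (projectiveResolution A) n
    (hG.of_iso ((projectiveResolution A).isoLeftDerivedObj G (n + 1)).symm)
  dsimp only [leftDerivedConnecting]
  infer_instance

lemma leftDerivedConnecting_comp (n : ℕ) (A : C) :
    (leftDerivedConnecting α β w h n).app A ≫ (NatTrans.leftDerived α n).app A = 0 := by
  rw [ProjectiveResolution.leftDerived_app_eq α (projectiveResolution A)]
  simp only [leftDerivedConnecting, Category.assoc, Iso.inv_hom_id_assoc,
    reassoc_of% resolutionConnecting_comp α β w h, zero_comp, comp_zero]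

lemma leftDerivedConnecting_exact (n : ℕ) (A : C) :
    (ShortComplex.mk _ _ (leftDerivedConnecting_comp α β w h n A)).Exact := by
  refine (ShortComplex.exact_iff_of_iso ?_).2
    (resolutionConnecting_exact α β w h (projectiveResolution A) n)
  refine ShortComplex.isoMk ((projectiveResolution A).isoLeftDerivedObj H (n + 1))
    ((projectiveResolution A).isoLeftDerivedObj F n)
    ((projectiveResolution A).isoLeftDerivedObj G n) ?_ ?_
  · simp only [leftDerivedConnecting, Category.assoc, Iso.inv_hom_id, Category.comp_id]
  · dsimp only
    rw [ProjectiveResolution.leftDerived_app_eq α (projectiveResolution A)]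
    simp only [Category.assoc, Iso.inv_hom_id, Category.comp_id]

end LeftDerivedConnecting

section ExtConnecting

open Limits Opposite

variable {R : Type u} [CommRing R]

/-- The contravariant functor `Hom(-, Y)`, as a covariant functor to the opposite category. -/
noncomputable abbrev homFunctorOp (Y : ModuleCat.{u} R) :
    ModuleCat.{u} R ⥤ (ModuleCat.{u} R)ᵒᵖ :=
  ((linearYoneda R (ModuleCat.{u} R)).obj Y).rightOp

/-- Functoriality of `homFunctorOp`. -/
noncomputable abbrev homFunctorOpMap {Y Z : ModuleCat.{u} R} (f : Y ⟶ Z) :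
    homFunctorOp Z ⟶ homFunctorOp Y :=
  NatTrans.rightOp ((linearYoneda R (ModuleCat.{u} R)).map f)

lemma homFunctorOpMap_comp_eq_zero (S : ShortComplex (ModuleCat.{u} R)) :
    homFunctorOpMap S.g ≫ homFunctorOpMap S.f = 0 := by
  ext P : 2
  apply Quiver.Hom.unop_inj
  ext (x : P ⟶ S.X₁)
  change (x ≫ S.f) ≫ S.g = 0
  simp

lemma homFunctorOp_shortExact {S : ShortComplex (ModuleCat.{u} R)} (hS : S.ShortExact)
    (P : ModuleCat.{u} R) (hP : Projective P) :
    (ShortComplex.mk ((homFunctorOpMap S.g).app P) ((homFunctorOpMap S.f).app P)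
      (congr_app (homFunctorOpMap_comp_eq_zero S) P)).ShortExact := by
  have w : ((linearYoneda R (ModuleCat.{u} R)).map S.f).app (op P) ≫
      ((linearYoneda R (ModuleCat.{u} R)).map S.g).app (op P) = 0 := by
    ext (x : P ⟶ S.X₁)
    change (x ≫ S.f) ≫ S.g = 0
    simp
  have := hS.mono_f
  have := hS.epi_g
  have h : (ShortComplex.mk _ _ w).ShortExact :=
    { exact := by
        rw [ShortComplex.moduleCat_exact_iff]
        intro (x : P ⟶ S.X₂) (hx : x ≫ S.g = 0)
        exact ⟨(hS.exact.lift x hx :), hS.exact.lift_f x hx⟩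
      mono_f := by
        rw [ModuleCat.mono_iff_injective]
        intro (x : P ⟶ S.X₁) (y : P ⟶ S.X₁) (hxy : x ≫ S.f = y ≫ S.f)
        exact (cancel_mono S.f).1 hxy
      epi_g := by
        rw [ModuleCat.epi_iff_surjective]
        intro (x : P ⟶ S.X₃)
        exact ⟨(Projective.factorThru x S.g :), Projective.factorThru_comp x S.g⟩ }
  exact h.op

lemma isZero_leftDerived_homFunctorOp_of_injective (E A : ModuleCat.{u} R) [Injective E]
    (n : ℕ) : IsZero (((homFunctorOp E).leftDerived (n + 1)).obj A) := by
  refine IsZero.of_iso ?_ ((projectiveResolution A).isoLeftDerivedObj (homFunctorOp E) (n + 1))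
  refine (HomologicalComplex.exactAt_iff_isZero_homology _ _).1 ?_
  rw [HomologicalComplex.exactAt_iff' _ (n + 2) (n + 1) n (by simp) (by simp)]
  have hP := (projectiveResolution A).exact_succ n
  have w : ((linearYoneda R (ModuleCat.{u} R)).obj E).map
        ((projectiveResolution A).complex.d (n + 1) n).op ≫
      ((linearYoneda R (ModuleCat.{u} R)).obj E).map
        ((projectiveResolution A).complex.d (n + 2) (n + 1)).op = 0 := by
    rw [← Functor.map_comp, ← op_comp, HomologicalComplex.d_comp_d, op_zero, Functor.map_zero]
  have h : (ShortComplex.mk _ _ w).Exact := by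
    rw [ShortComplex.moduleCat_exact_iff]
    intro (x : _ ⟶ E) hx
    exact ⟨(hP.descToInjective x hx :), hP.comp_descToInjective x hx⟩
  exact h.op

instance (Y : ModuleCat.{u} R) : PreservesLimits ((linearYoneda R (ModuleCat.{u} R)).obj Y) :=
  have : PreservesLimits ((linearYoneda R (ModuleCat.{u} R)).obj Y ⋙ forget _) :=
    (inferInstance : PreservesLimits (yoneda.obj Y))
  preservesLimits_of_reflects_of_preserves _ (forget _)

instance (Y : ModuleCat.{u} R) : PreservesFiniteColimits (homFunctorOp Y) :=
  preservesFiniteColimits_rightOp _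

end ExtConnecting

lemma CategoryTheory.NatTrans.leftDerived_comp_fromLeftDerivedZero
    {C D : Type*} [Category* C] [Category* D]
    [Abelian C] [Abelian D] [HasProjectiveResolutions C] {F G : C ⥤ D} [F.Additive] [G.Additive]
    (α : F ⟶ G) (A : C) :
    (NatTrans.leftDerived α 0).app A ≫ G.fromLeftDerivedZero.app A =
      F.fromLeftDerivedZero.app A ≫ α.app A := by
  have h : HomologicalComplex.opcyclesMap ((NatTrans.mapHomologicalComplex α _).app
      (projectiveResolution A).complex) 0 ≫ (projectiveResolution A).fromLeftDerivedZero' G =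
      (projectiveResolution A).fromLeftDerivedZero' F ≫ α.app A := by
    simp only [← cancel_epi (HomologicalComplex.pOpcycles _ _),
      HomologicalComplex.p_opcyclesMap_assoc,
      ProjectiveResolution.pOpcycles_comp_fromLeftDerivedZero',
      ProjectiveResolution.pOpcycles_comp_fromLeftDerivedZero'_assoc]
    exact (α.naturality _).symm
  have key : HomologicalComplex.homologyMap ((NatTrans.mapHomologicalComplex α _).app
      (projectiveResolution A).complex) 0 ≫ (ChainComplex.isoHomologyι₀ _).hom ≫
        (projectiveResolution A).fromLeftDerivedZero' G =
      ((ChainComplex.isoHomologyι₀ _).hom ≫ (projectiveResolution A).fromLeftDerivedZero' F) ≫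
        α.app A := by
    rw [Category.assoc, ← h]
    exact HomologicalComplex.homologyι_naturality_assoc _ _ _
  have comp_aux : ∀ {X₁ X₂ X₃ X₄ X₅ X₆ : D} (e : X₁ ≅ X₂) (m : X₂ ⟶ X₃) (e' : X₄ ≅ X₃)
      (k : X₃ ⟶ X₅) (k' : X₂ ⟶ X₆) (q : X₆ ⟶ X₅), m ≫ k = k' ≫ q →
      (e.hom ≫ m ≫ e'.inv) ≫ e'.hom ≫ k = (e.hom ≫ k') ≫ q := by
    intro X₁ X₂ X₃ X₄ X₅ X₆ e m e' k k' q hk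
    simp [hk]
  rw [ProjectiveResolution.leftDerived_app_eq α (projectiveResolution A),
    (projectiveResolution A).fromLeftDerivedZero_eq,
    (projectiveResolution A).fromLeftDerivedZero_eq]
  exact comp_aux _ _ _ _ _ _ key

section FilteredColimit

open Limits

variable {R : Type u} [CommRing R] {D : Type} [SmallCategory D] [IsFiltered D]

instance (F : D ⥤ ModuleCat.{u} R) : PreservesColimit F (forget (ModuleCat.{u} R)) := by
  have : PreservesFilteredColimitsOfSize.{0, 0} (forget (ModuleCat.{u} R)) :=
    preservesFilteredColimitsOfSize_shrink.{0, u, 0, u} _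
  infer_instance

/-- Filtered colimits preserve right exact sequences of modules. -/
lemma isColimit_surjective_and_exact {F₁ F₂ F₃ : D ⥤ ModuleCat.{u} R} (f : F₁ ⟶ F₂) (g : F₂ ⟶ F₃)
    {c₁ : Cocone F₁} {c₂ : Cocone F₂} {c₃ : Cocone F₃} (h₁ : IsColimit c₁) (h₂ : IsColimit c₂)
    (h₃ : IsColimit c₃) (φ : c₁.pt ⟶ c₂.pt) (ψ : c₂.pt ⟶ c₃.pt)
    (hφ : ∀ t, c₁.ι.app t ≫ φ = f.app t ≫ c₂.ι.app t)
    (hψ : ∀ t, c₂.ι.app t ≫ ψ = g.app t ≫ c₃.ι.app t)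
    (hs : ∀ t, Function.Surjective (g.app t))
    (hfg : ∀ t, f.app t ≫ g.app t = 0)
    (hex : ∀ t y, g.app t y = 0 → ∃ x, f.app t x = y) :
    Function.Surjective ψ ∧ ∀ y, ψ y = 0 ↔ ∃ x, φ x = y := by
  have hφ' : ∀ t x, φ (c₁.ι.app t x) = c₂.ι.app t (f.app t x) := fun t x =>
    ConcreteCategory.congr_hom (hφ t) x
  have hψ' : ∀ t x, ψ (c₂.ι.app t x) = c₃.ι.app t (g.app t x) := fun t x =>
    ConcreteCategory.congr_hom (hψ t) x
  refine ⟨fun z => ?_, fun y => ⟨fun hy => ?_, ?_⟩⟩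
  · obtain ⟨t, y, rfl⟩ := Concrete.isColimit_exists_rep _ h₃ z
    obtain ⟨x, rfl⟩ := hs t y
    exact ⟨_, hψ' t x⟩
  · obtain ⟨t, y, rfl⟩ := Concrete.isColimit_exists_rep _ h₂ y
    rw [hψ', ← map_zero (c₃.ι.app t).hom] at hy
    obtain ⟨s, a, b, hab⟩ := Concrete.isColimit_exists_of_rep_eq _ h₃ _ _ hy
    have hy' : g.app s (F₂.map a y) = 0 := by
      have := ConcreteCategory.congr_hom (g.naturality a) y
      refine (this.trans hab).trans (map_zero (F₃.map b).hom)
    obtain ⟨x, hx⟩ := hex s _ hy'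
    refine ⟨c₁.ι.app s x, ?_⟩
    rw [hφ', hx]
    exact ConcreteCategory.congr_hom (c₂.w a) y
  · rintro ⟨x, rfl⟩
    obtain ⟨t, x, rfl⟩ := Concrete.isColimit_exists_rep _ h₁ x
    rw [hφ', hψ']
    have : g.app t (f.app t x) = 0 := ConcreteCategory.congr_hom (hfg t) x
    rw [this]
    exact map_zero (c₃.ι.app t).hom

end FilteredColimit

namespace localCohomology

open Limits Opposite

variable {R : Type u} [CommRing R] (J : Ideal R)

/-- The diagram of modules `Ext^i(R/J^t, M)`. -/
noncomputable abbrev extDiagram (i : ℕ) (M : ModuleCat.{u} R) : ℕᵒᵖᵒᵖ ⥤ ModuleCat.{u} R :=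
  (ringModIdeals (idealPowersDiagram J)).op ⋙ ((homFunctorOp M).leftDerived i).leftOp

/-- The canonical cocone on `extDiagram` with point the local cohomology module. -/
noncomputable def extCocone (i : ℕ) (M : ModuleCat.{u} R) : Cocone (extDiagram J i M) :=
  ((evaluation _ _).obj M).mapCocone (colimit.cocone (diagram (idealPowersDiagram J) i))

/-- Local cohomology is the colimit of `Ext^i(R/J^t, M)`. -/
noncomputable def isColimitExtCocone (i : ℕ) (M : ModuleCat.{u} R) :
    IsColimit (extCocone J i M) :=
  isColimitOfPreserves ((evaluation _ _).obj M)
    (colimit.isColimit (diagram (idealPowersDiagram J) i))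

/-- Functoriality of `extDiagram` in the module. -/
noncomputable abbrev extDiagramMap (i : ℕ) {M N : ModuleCat.{u} R} (f : M ⟶ N) :
    extDiagram J i M ⟶ extDiagram J i N :=
  Functor.whiskerLeft _ (NatTrans.leftOp (NatTrans.leftDerived (homFunctorOpMap f) i))

lemma extCocone_ι_comp_map (i : ℕ) {M N : ModuleCat.{u} R} (f : M ⟶ N) (t : ℕᵒᵖᵒᵖ) :
    (extCocone J i M).ι.app t ≫ (localCohomology J i).map f =
      (extDiagramMap J i f).app t ≫ (extCocone J i N).ι.app t :=
  ((colimit.ι (diagram (idealPowersDiagram J) i) t).naturality f).symm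

/-- The connecting homomorphism is surjective with the expected kernel when the middle term of the
short exact sequence is injective. -/
theorem exists_connecting {S : ShortComplex (ModuleCat.{u} R)} (hS : S.ShortExact)
    [Injective S.X₂] (i : ℕ) :
    ∃ δ : (localCohomology J i).obj S.X₃ →ₗ[R] (localCohomology J (i + 1)).obj S.X₁,
      Function.Surjective δ ∧
        ∀ y, δ y = 0 ↔ ∃ x, ((localCohomology J i).map S.g).hom x = y := by
  let Δ := leftDerivedConnecting _ _ (homFunctorOpMap_comp_eq_zero S)
    (homFunctorOp_shortExact hS) i
  let g : extDiagram J i S.X₃ ⟶ extDiagram J (i + 1) S.X₁ :=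
    Functor.whiskerLeft _ (NatTrans.leftOp Δ)
  let ψ := IsColimit.map (isColimitExtCocone J i S.X₃) (extCocone J (i + 1) S.X₁) g
  refine ⟨ψ.hom, isColimit_surjective_and_exact (extDiagramMap J i S.g) g
    (isColimitExtCocone J i S.X₂) (isColimitExtCocone J i S.X₃)
    (isColimitExtCocone J (i + 1) S.X₁) ((localCohomology J i).map S.g) ψ
    (extCocone_ι_comp_map J i S.g) (fun t => IsColimit.ι_map _ _ _ _) (fun t => ?_) (fun t => ?_)
    (fun t => ?_)⟩
  · have := leftDerivedConnecting_mono _ _ (homFunctorOpMap_comp_eq_zero S)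
      (homFunctorOp_shortExact hS) i ((ringModIdeals (idealPowersDiagram J)).obj t.unop)
      (isZero_leftDerived_homFunctorOp_of_injective _ _ _)
    rw [← ModuleCat.epi_iff_surjective]
    exact @unop_epi_of_mono _ _ _ _ (Δ.app _) this
  · exact Quiver.Hom.op_inj (leftDerivedConnecting_comp _ _ (homFunctorOpMap_comp_eq_zero S)
      (homFunctorOp_shortExact hS) i ((ringModIdeals (idealPowersDiagram J)).obj t.unop))
  · have := (leftDerivedConnecting_exact _ _ (homFunctorOpMap_comp_eq_zero S)
      (homFunctorOp_shortExact hS) i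
      ((ringModIdeals (idealPowersDiagram J)).obj t.unop)).unop
    exact (ShortComplex.moduleCat_exact_iff _).1 this

theorem subsingleton_of_injective (E : ModuleCat.{u} R) [Injective E] (i : ℕ) :
    Subsingleton ((localCohomology J (i + 1)).obj E) := by
  refine subsingleton_of_forall_eq 0 fun z => ?_
  obtain ⟨t, y, rfl⟩ := Concrete.isColimit_exists_rep _ (isColimitExtCocone J (i + 1) E) z
  have : Subsingleton ((extDiagram J (i + 1) E).obj t) :=
    ModuleCat.subsingleton_of_isZero
      (isZero_leftDerived_homFunctorOp_of_injective E _ i).unop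
  rw [Subsingleton.elim y 0]
  exact map_zero ((extCocone J (i + 1) E).ι.app t).hom

end localCohomology

/-- The submodule of elements annihilated by a power of the ideal `J`. -/
def Ideal.powerTorsion {R : Type*} [CommRing R] (J : Ideal R) (M : Type*) [AddCommGroup M]
    [Module R M] : Submodule R M where
  carrier := {m | ∃ t : ℕ, ∀ a ∈ J ^ t, a • m = 0}
  zero_mem' := ⟨0, by simp⟩
  add_mem' := by
    rintro x y ⟨t, ht⟩ ⟨s, hs⟩
    refine ⟨t + s, fun a ha => ?_⟩
    rw [smul_add, ht a (Ideal.pow_le_pow_right (by simp) ha),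
      hs a (Ideal.pow_le_pow_right (by simp) ha), add_zero]
  smul_mem' := by
    rintro r x ⟨t, ht⟩
    exact ⟨t, fun a ha => by rw [smul_comm, ht a ha, smul_zero]⟩

namespace localCohomology

open Limits Opposite

variable {R : Type u} [CommRing R] (J : Ideal R)

/-- Evaluation at `1`, from `Hom(R/J^t, M)` to `M`. -/
noncomputable def evalOne (M : ModuleCat.{u} R) (t : ℕᵒᵖᵒᵖ) :
    ((linearYoneda R (ModuleCat.{u} R)).obj M).obj
      ((ringModIdeals (idealPowersDiagram J)).op.obj t) ⟶ M :=
  ModuleCat.ofHom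
    { toFun := fun f => f.hom (Ideal.Quotient.mk (J ^ t.unop.unop) 1)
      map_add' := fun _ _ => rfl
      map_smul' := fun _ _ => rfl }

/-- The cocone on `extDiagram J 0 M` given by the modules `Hom(R/J^t, M)`, seen in `M`. -/
noncomputable def zeroCocone (M : ModuleCat.{u} R) : Cocone (extDiagram J 0 M) where
  pt := M
  ι :=
    { app := fun t => ((homFunctorOp M).leftDerivedZeroIsoSelf.inv.app
        ((ringModIdeals (idealPowersDiagram J)).obj t.unop)).unop ≫ evalOne J M t
      naturality := fun t s a => by
        have h := congr_arg Quiver.Hom.unop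
          ((homFunctorOp M).leftDerivedZeroIsoSelf.inv.naturality
            ((ringModIdeals (idealPowersDiagram J)).map a.unop))
        rw [unop_comp, unop_comp] at h
        have h' : ((homFunctorOp M).map ((ringModIdeals (idealPowersDiagram J)).map a.unop)).unop ≫
            evalOne J M s = evalOne J M t := rfl
        refine (Category.assoc _ _ _).symm.trans ?_
        refine (congr_arg (· ≫ evalOne J M s) h.symm).trans ?_
        refine (Category.assoc _ _ _).trans ?_
        rw [h']
        exact (Category.comp_id _).symm }

/-- The canonical map from local cohomology in degree zero to the module. -/
noncomputable def zeroToModule (M : ModuleCat.{u} R) : (localCohomology J 0).obj M →ₗ[R] M :=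
  ((isColimitExtCocone J 0 M).desc (zeroCocone J M)).hom

lemma zeroToModule_ι (M : ModuleCat.{u} R) (t : ℕᵒᵖᵒᵖ) (y : (extDiagram J 0 M).obj t) :
    zeroToModule J M ((extCocone J 0 M).ι.app t y) = (zeroCocone J M).ι.app t y :=
  ConcreteCategory.congr_hom ((isColimitExtCocone J 0 M).fac (zeroCocone J M) t) y

lemma evalOne_injective (M : ModuleCat.{u} R) (t : ℕᵒᵖᵒᵖ) :
    Function.Injective (evalOne J M t) := by
  intro (f : ModuleCat.of R (R ⧸ J ^ t.unop.unop) ⟶ M)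
    (g : ModuleCat.of R (R ⧸ J ^ t.unop.unop) ⟶ M)
    (hfg : f.hom (Ideal.Quotient.mk _ 1) = g.hom (Ideal.Quotient.mk _ 1))
  refine ModuleCat.hom_ext (LinearMap.ext fun (x : R ⧸ J ^ t.unop.unop) => ?_)
  obtain ⟨r, rfl⟩ := Ideal.Quotient.mk_surjective x
  have hr : Ideal.Quotient.mk (J ^ t.unop.unop) r = r • Ideal.Quotient.mk (J ^ t.unop.unop) 1 := by
    rw [← Ideal.Quotient.mk_eq_mk, ← Ideal.Quotient.mk_eq_mk, ← Submodule.Quotient.mk_smul]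
    simp
  rw [hr]
  exact (f.hom.map_smul r _).trans ((congr_arg (r • ·) hfg).trans (g.hom.map_smul r _).symm)

lemma zeroToModule_injective (M : ModuleCat.{u} R) : Function.Injective (zeroToModule J M) := by
  rw [injective_iff_map_eq_zero]
  intro z hz
  obtain ⟨t, y, rfl⟩ := Concrete.isColimit_exists_rep _ (isColimitExtCocone J 0 M) z
  have hy : evalOne J M t (((homFunctorOp M).leftDerivedZeroIsoSelf.inv.app
        ((ringModIdeals (idealPowersDiagram J)).obj t.unop)).unop y) = 0 :=
    (zeroToModule_ι J M t y).symm.trans hz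
  have hinj := (ModuleCat.mono_iff_injective
    ((homFunctorOp M).leftDerivedZeroIsoSelf.inv.app
        ((ringModIdeals (idealPowersDiagram J)).obj t.unop)).unop).1 inferInstance
  have hy0 : y = 0 := by
    apply hinj
    apply evalOne_injective J M t
    exact hy.trans (((evalOne J M t).hom.map_zero).symm.trans
      (congr_arg _ (ModuleCat.Hom.hom _).map_zero.symm))
  rw [hy0]
  exact map_zero ((extCocone J 0 M).ι.app t).hom

lemma mem_range_zeroToModule (M : ModuleCat.{u} R) (m : M) :
    (∃ z, zeroToModule J M z = m) ↔ m ∈ J.powerTorsion M := by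
  constructor
  · rintro ⟨z, rfl⟩
    obtain ⟨t, y, rfl⟩ := Concrete.isColimit_exists_rep _ (isColimitExtCocone J 0 M) z
    refine ⟨t.unop.unop, fun a ha => ?_⟩
    rw [zeroToModule_ι]
    let f : ModuleCat.of R (R ⧸ J ^ t.unop.unop) ⟶ M :=
      ((homFunctorOp M).leftDerivedZeroIsoSelf.inv.app
        ((ringModIdeals (idealPowersDiagram J)).obj t.unop)).unop y
    change a • f.hom (Submodule.Quotient.mk 1) = 0
    rw [← f.hom.map_smul, ← Submodule.Quotient.mk_smul,
      (Submodule.Quotient.mk_eq_zero (J ^ t.unop.unop)).2 (by simpa using ha), map_zero]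
  · rintro ⟨t, ht⟩
    let f : ModuleCat.of R (R ⧸ J ^ t) ⟶ M := ModuleCat.ofHom
      (Submodule.liftQ _ (LinearMap.toSpanSingleton R M m) fun a ha => ht a ha)
    have hsurj := (ModuleCat.epi_iff_surjective
      ((homFunctorOp M).leftDerivedZeroIsoSelf.inv.app
        ((ringModIdeals (idealPowersDiagram J)).obj (op t))).unop).1 inferInstance
    obtain ⟨y, hy⟩ := hsurj f
    refine ⟨(extCocone J 0 M).ι.app (op (op t)) y, ?_⟩
    rw [zeroToModule_ι]
    refine (congr_arg (evalOne J M (op (op t))) hy).trans ?_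
    change LinearMap.toSpanSingleton R M m 1 = m
    simp

lemma zeroToModule_naturality {M N : ModuleCat.{u} R} (f : M ⟶ N)
    (z : (localCohomology J 0).obj M) :
    zeroToModule J N (((localCohomology J 0).map f).hom z) = f.hom (zeroToModule J M z) := by
  obtain ⟨t, y, rfl⟩ := Concrete.isColimit_exists_rep _ (isColimitExtCocone J 0 M) z
  have h₁ := ConcreteCategory.congr_hom (extCocone_ι_comp_map J 0 f t) y
  refine (congr_arg (zeroToModule J N) h₁).trans ?_
  refine (zeroToModule_ι J N t _).trans ?_
  rw [zeroToModule_ι]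
  set A := (ringModIdeals (idealPowersDiagram J)).obj t.unop
  have h₂ : (homFunctorOp N).leftDerivedZeroIsoSelf.inv.app A ≫
      (NatTrans.leftDerived (homFunctorOpMap f) 0).app A = (homFunctorOpMap f).app A ≫
      (homFunctorOp M).leftDerivedZeroIsoSelf.inv.app A := by
    rw [← Iso.app_inv, ← Iso.app_inv, Iso.inv_comp_eq, ← Category.assoc, Iso.eq_comp_inv]
    exact NatTrans.leftDerived_comp_fromLeftDerivedZero _ A
  have h₃ := ConcreteCategory.congr_hom (congr_arg Quiver.Hom.unop h₂) y
  exact congr_arg (evalOne J N t) h₃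

end localCohomology

namespace Ideal

variable {R : Type*} [CommRing R] {M : Type*} [AddCommGroup M] [Module R M]

lemma powerTorsion_anti {J K : Ideal R} (h : J ≤ K) : K.powerTorsion M ≤ J.powerTorsion M :=
  fun _ ⟨t, ht⟩ => ⟨t, fun a ha => ht a (Ideal.pow_right_mono h t ha)⟩

lemma map_mem_powerTorsion {J : Ideal R} {N : Type*} [AddCommGroup N] [Module R N]
    (f : M →ₗ[R] N) {m : M} (hm : m ∈ J.powerTorsion M) : f m ∈ J.powerTorsion N := by
  obtain ⟨t, ht⟩ := hm
  exact ⟨t, fun a ha => by rw [← map_smul, ht a ha, map_zero]⟩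

lemma map_mem_powerTorsion_iff {J : Ideal R} {N : Type*} [AddCommGroup N] [Module R N]
    {f : M →ₗ[R] N} (hf : Function.Injective f) {m : M} :
    f m ∈ J.powerTorsion N ↔ m ∈ J.powerTorsion M := by
  refine ⟨fun ⟨t, ht⟩ => ⟨t, fun a ha => hf ?_⟩, map_mem_powerTorsion f⟩
  rw [map_smul, ht a ha, map_zero]

lemma exists_pow_smul_eq_zero_of_mem_powerTorsion {J : Ideal R} {m : M}
    (hm : m ∈ J.powerTorsion M) {x : R} (hx : x ∈ J) : ∃ k : ℕ, x ^ k • m = 0 :=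
  hm.imp fun _ ht => ht _ (Ideal.pow_mem_pow hx _)

lemma mem_powerTorsion_sup_span {J : Ideal R} {x : R} {m : M} :
    m ∈ (J ⊔ span {x}).powerTorsion M ↔ m ∈ J.powerTorsion M ∧ ∃ k : ℕ, x ^ k • m = 0 := by
  constructor
  · exact fun h => ⟨powerTorsion_anti le_sup_left h,
      exists_pow_smul_eq_zero_of_mem_powerTorsion h
        (Ideal.mem_sup_right (Ideal.mem_span_singleton_self x))⟩
  · rintro ⟨⟨t, ht⟩, k, hk⟩
    refine ⟨t + k, fun a ha => ?_⟩
    obtain ⟨b, hb, c, hc, rfl⟩ := Submodule.mem_sup.1 (Ideal.sup_pow_add_le_pow_sup_pow ha)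
    rw [Ideal.span_singleton_pow, Ideal.mem_span_singleton'] at hc
    obtain ⟨d, rfl⟩ := hc
    rw [add_smul, ht b hb, mul_smul, hk, smul_zero, add_zero]

/-- In an injective module over a Noetherian ring, the `J`-power torsion is divisible by `x`
up to `x`-power torsion. -/
lemma exists_pow_smul_eq_of_injective {R : Type u} [CommRing R] [IsNoetherianRing R]
    {E : Type u} [AddCommGroup E] [Module R E] [Module.Injective R E] {J : Ideal R} (x : R)
    {w : E} (hw : w ∈ J.powerTorsion E) (k : ℕ) :
    ∃ v ∈ J.powerTorsion E, ∃ l : ℕ, x ^ (k + l) • v = x ^ l • w := by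
  obtain ⟨n, hn⟩ := hw
  let A := R ⧸ J ^ n
  obtain ⟨l, hl⟩ := monotone_stabilizes_iff_noetherian.2 (inferInstance : IsNoetherian R A)
    { toFun := fun j => LinearMap.ker (LinearMap.lsmul R A (x ^ j))
      monotone' := fun i j hij a ha => by
        obtain ⟨d, rfl⟩ := Nat.exists_eq_add_of_le' hij
        simp only [LinearMap.mem_ker, LinearMap.lsmul_apply] at ha ⊢
        rw [pow_add, mul_smul, ha, smul_zero] }
  let h₀ : A →ₗ[R] E := Submodule.liftQ _ (LinearMap.toSpanSingleton R E w) fun a ha => hn a ha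
  let g : A →ₗ[R] A := LinearMap.lsmul R A (x ^ (k + l))
  let h : A →ₗ[R] E := LinearMap.lsmul R E (x ^ l) ∘ₗ h₀
  have hker : LinearMap.ker g ≤ LinearMap.ker h := by
    intro a ha
    have ha' : a ∈ LinearMap.ker (LinearMap.lsmul R A (x ^ l)) := by
      have := (hl (k + l) (by simp)).ge
      exact this ha
    simp only [LinearMap.mem_ker, LinearMap.lsmul_apply] at ha'
    change x ^ l • h₀ a = 0
    rw [← map_smul, ha', map_zero]
  let g' : (A ⧸ LinearMap.ker g) →ₗ[R] A := (LinearMap.ker g).liftQ g le_rfl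
  let h' : (A ⧸ LinearMap.ker g) →ₗ[R] E := (LinearMap.ker g).liftQ h hker
  have hg' : Function.Injective g' := by
    rw [← LinearMap.ker_eq_bot]
    exact Submodule.ker_liftQ_eq_bot _ _ _ le_rfl
  obtain ⟨u, hu⟩ := Module.Injective.out g' hg' h'
  let one : A := Submodule.Quotient.mk 1
  have h1 : h₀ one = w := by
    change LinearMap.toSpanSingleton R E w 1 = w
    simp
  refine ⟨u one, ⟨n, fun a ha => ?_⟩, l, ?_⟩
  · rw [← map_smul, ← Submodule.Quotient.mk_smul,
      (Submodule.Quotient.mk_eq_zero (J ^ n)).2 (by simpa using ha), map_zero]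
  · have := hu (Submodule.Quotient.mk one)
    change u (x ^ (k + l) • one) = x ^ l • h₀ one at this
    rw [← map_smul, this, h1]

/-- Induction on the generators of a finitely generated ideal. -/
lemma FG.sup_induction {J : Ideal R} (hJ : J.FG) {P : Ideal R → Prop} {J₀ : Ideal R}
    (h₀ : P J₀) (h : ∀ K, ∀ x ∈ J, P K → P (K ⊔ span {x})) : P (J₀ ⊔ J) := by
  classical
  obtain ⟨s, rfl⟩ := hJ
  have key : ∀ s' : Finset R, s' ⊆ s → P (J₀ ⊔ span (s' : Set R)) := by
    intro s'
    induction s' using Finset.induction_on with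
    | empty => simpa using h₀
    | insert a s' _ ih =>
      intro hs
      rw [Finset.coe_insert, span_insert, sup_comm (span {a}), ← sup_assoc]
      exact h _ a (subset_span (hs (Finset.mem_insert_self a s')))
        (ih ((Finset.subset_insert a s').trans hs))
  exact key s subset_rfl

end Ideal

lemma LinearMap.exists_apply_eq_of_surjective {R A B D : Type*} [CommRing R] [AddCommGroup A]
    [AddCommGroup B] [AddCommGroup D] [Module R A] [Module R B] [Module R D] {p : A →ₗ[R] B}
    (hp : Function.Surjective p) {q : A →ₗ[R] D} (h : ∀ a, p a = 0 → q a = 0) :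
    ∃ ρ : B →ₗ[R] D, ∀ a, ρ (p a) = q a := by
  refine ⟨(LinearMap.ker p).liftQ q h ∘ₗ (p.quotKerEquivOfSurjective hp).symm, fun a => ?_⟩
  have : (p.quotKerEquivOfSurjective hp).symm (p a) = Submodule.Quotient.mk a := by
    rw [LinearEquiv.symm_apply_eq]
    rfl
  rw [LinearMap.comp_apply, LinearEquiv.coe_coe, this]
  rfl

namespace localCohomology

variable {R : Type u} [CommRing R]

/-- A short exact sequence `0 → M → E → C → 0` with `E` injective. -/
structure InjectiveShortExact (M E C : ModuleCat.{u} R) where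
  /-- The inclusion. -/
  f : M →ₗ[R] E
  /-- The projection. -/
  g : E →ₗ[R] C
  f_injective : Function.Injective f
  g_surjective : Function.Surjective g
  exact : Function.Exact f g
  injective : Module.Injective R E

lemma exists_injectiveShortExact (M : ModuleCat.{u} R) :
    ∃ E C : ModuleCat.{u} R, Nonempty (InjectiveShortExact M E C) := by
  let p := (EnoughInjectives.presentation M).some
  let f : M ⟶ p.J := p.f
  have hf : Function.Injective f.hom := (ModuleCat.mono_iff_injective f).1 p.mono
  refine ⟨p.J, ModuleCat.of R (p.J ⧸ LinearMap.range f.hom), ⟨⟨f.hom, Submodule.mkQ _, hf,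
    Submodule.mkQ_surjective _, ?_, ?_⟩⟩⟩
  · rw [LinearMap.exact_iff, Submodule.ker_mkQ]
  · have : Injective (ModuleCat.of R p.J) := p.injective
    exact Module.injective_module_of_injective_object R p.J

namespace InjectiveShortExact

variable {M E C : ModuleCat.{u} R}

lemma exists_connecting (P : InjectiveShortExact M E C) (J : Ideal R) (i : ℕ) :
    ∃ δ : (localCohomology J i).obj C →ₗ[R] (localCohomology J (i + 1)).obj M,
      Function.Surjective δ ∧ ∀ y, δ y = 0 ↔
        ∃ x, ((localCohomology J i).map (ModuleCat.ofHom P.g)).hom x = y := by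
  let S : ShortComplex (ModuleCat.{u} R) := ShortComplex.mk (ModuleCat.ofHom P.f)
    (ModuleCat.ofHom P.g) (ModuleCat.hom_ext P.exact.linearMap_comp_eq_zero)
  have hS : S.ShortExact :=
    { exact := (ShortComplex.ShortExact.moduleCat_exact_iff_function_exact S).2 P.exact
      mono_f := (ModuleCat.mono_iff_injective _).2 P.f_injective
      epi_g := (ModuleCat.epi_iff_surjective _).2 P.g_surjective }
  have := P.injective
  have : Injective S.X₂ := Module.injective_object_of_injective_module R E
  exact localCohomology.exists_connecting J hS i

lemma nonempty_equiv (P : InjectiveShortExact M E C) (J : Ideal R) (i : ℕ) : Nonempty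
    ((localCohomology J (i + 1)).obj C ≃ₗ[R] (localCohomology J (i + 2)).obj M) := by
  obtain ⟨δ, hδ, hk⟩ := P.exists_connecting J (i + 1)
  have := P.injective
  have : Injective E := Module.injective_object_of_injective_module R E
  have := subsingleton_of_injective J E i
  refine ⟨LinearEquiv.ofBijective δ ⟨?_, hδ⟩⟩
  rw [injective_iff_map_eq_zero]
  intro y hy
  obtain ⟨x, rfl⟩ := (hk y).1 hy
  rw [Subsingleton.elim x 0, map_zero]

end InjectiveShortExact

/-- Local cohomology in degree zero is the power torsion. -/
noncomputable def zeroEquivPowerTorsion (J : Ideal R) (M : ModuleCat.{u} R) :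
    (localCohomology J 0).obj M ≃ₗ[R] J.powerTorsion M :=
  (LinearEquiv.ofInjective _ (zeroToModule_injective J M)).trans
    (LinearEquiv.ofEq _ _ (Submodule.ext fun m => mem_range_zeroToModule J M m))

lemma InjectiveShortExact.exists_connecting_zero {M E C : ModuleCat.{u} R}
    (P : InjectiveShortExact M E C) (J : Ideal R) :
    ∃ δ : J.powerTorsion C →ₗ[R] (localCohomology J 1).obj M,
      Function.Surjective δ ∧ ∀ y, δ y = 0 ↔ ∃ e ∈ J.powerTorsion E, P.g e = y := by
  obtain ⟨δ, hδ, hk⟩ := P.exists_connecting J 0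
  let e := zeroEquivPowerTorsion J C
  have he : ∀ z, (e z : C) = zeroToModule J C z := fun _ => rfl
  refine ⟨δ ∘ₗ e.symm, hδ.comp e.symm.surjective, fun y => ?_⟩
  obtain ⟨y, rfl⟩ := e.surjective y
  simp only [LinearMap.comp_apply, LinearEquiv.coe_coe, LinearEquiv.symm_apply_apply, hk, he]
  constructor
  · rintro ⟨x, rfl⟩
    exact ⟨zeroToModule J E x, (mem_range_zeroToModule J E _).1 ⟨x, rfl⟩,
      (zeroToModule_naturality J (ModuleCat.ofHom P.g) x).symm⟩
  · rintro ⟨w, hw, hwy⟩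
    obtain ⟨x, rfl⟩ := (mem_range_zeroToModule J E w).2 hw
    refine ⟨x, zeroToModule_injective J C ?_⟩
    exact (zeroToModule_naturality J (ModuleCat.ofHom P.g) x).trans hwy

end localCohomology

namespace localCohomology

variable {R : Type u} [CommRing R]

lemma InjectiveShortExact.exists_f_eq_pow_smul {M E C : ModuleCat.{u} R}
    (P : InjectiveShortExact M E C) {J : Ideal R} {e : E} (he : e ∈ J.powerTorsion E) {x : R}
    {k : ℕ} (h : x ^ k • P.g e = 0) : ∃ m ∈ J.powerTorsion M, P.f m = x ^ k • e := by
  obtain ⟨m, hm⟩ := (P.exact (x ^ k • e)).1 (by rw [map_smul, h])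
  refine ⟨m, ?_, hm⟩
  rw [← Ideal.map_mem_powerTorsion_iff P.f_injective, hm]
  exact Submodule.smul_mem _ _ he

/-- Comparison of the first local cohomology modules with respect to `J ⊔ (x)` and `J`. -/
lemma InjectiveShortExact.exists_restriction {M E C : ModuleCat.{u} R}
    (P : InjectiveShortExact M E C) {J : Ideal R} {x : R}
    {δ' : (J ⊔ Ideal.span {x}).powerTorsion C →ₗ[R]
      (localCohomology (J ⊔ Ideal.span {x}) 1).obj M}
    (hδ' : Function.Surjective δ')
    (hk' : ∀ y, δ' y = 0 ↔ ∃ e ∈ (J ⊔ Ideal.span {x}).powerTorsion E, P.g e = y)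
    {δ : J.powerTorsion C →ₗ[R] (localCohomology J 1).obj M}
    (hk : ∀ y, δ y = 0 ↔ ∃ e ∈ J.powerTorsion E, P.g e = y) :
    ∃ ρ : (localCohomology (J ⊔ Ideal.span {x}) 1).obj M →ₗ[R] (localCohomology J 1).obj M,
      ∀ c, ρ (δ' c) =
        δ (Submodule.inclusion (Ideal.powerTorsion_anti le_sup_left) c) := by
  refine LinearMap.exists_apply_eq_of_surjective hδ'
    (q := δ ∘ₗ Submodule.inclusion (Ideal.powerTorsion_anti le_sup_left)) fun c hc => ?_
  obtain ⟨e, he, hec⟩ := (hk' c).1 hc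
  exact (hk _).2 ⟨e, Ideal.powerTorsion_anti le_sup_left he, hec⟩

lemma exists_pow_smul_eq_zero {J : Ideal R} {x : R} (hx : x ∈ J) (M : ModuleCat.{u} R) (i : ℕ)
    (y : (localCohomology J i).obj M) : ∃ k : ℕ, x ^ k • y = 0 := by
  induction i generalizing M with
  | zero =>
    have ε := zeroEquivPowerTorsion J M
    obtain ⟨k, hk⟩ := Ideal.exists_pow_smul_eq_zero_of_mem_powerTorsion (ε y).2 hx
    refine ⟨k, ε.injective ?_⟩
    rw [map_smul, map_zero]
    exact Subtype.ext hk
  | succ i ih =>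
    obtain ⟨E, C, ⟨P⟩⟩ := exists_injectiveShortExact M
    obtain ⟨δ, hδ, -⟩ := P.exists_connecting J i
    obtain ⟨y, rfl⟩ := hδ y
    exact (ih C y).imp fun k hk => by rw [← map_smul, hk, map_zero]

lemma subsingleton_bot (M : ModuleCat.{u} R) (i : ℕ) :
    Subsingleton ((localCohomology (⊥ : Ideal R) (i + 1)).obj M) := by
  induction i generalizing M with
  | zero =>
    obtain ⟨E, C, ⟨P⟩⟩ := exists_injectiveShortExact M
    obtain ⟨δ, hδ, hk⟩ := P.exists_connecting_zero ⊥
    refine subsingleton_of_forall_eq 0 fun y => ?_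
    obtain ⟨y, rfl⟩ := hδ y
    obtain ⟨e, he⟩ := P.g_surjective y
    exact (hk y).2 ⟨e, ⟨1, fun a ha => by simp_all⟩, he⟩
  | succ i ih =>
    obtain ⟨E, C, ⟨P⟩⟩ := exists_injectiveShortExact M
    obtain ⟨ε⟩ := P.nonempty_equiv ⊥ i
    have := ih C
    exact ε.symm.subsingleton

variable [IsNoetherianRing R]

/-- The kernel of the restriction `H^(i+1)_(J ⊔ (x))(M) → H^(i+1)_J(M)` is controlled by the
localization of `H^i_J(M)` away from `x`. -/
theorem exists_restriction_ker (J : Ideal R) (x : R) (M : ModuleCat.{u} R) (i : ℕ) :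
    ∃ ρ : (localCohomology (J ⊔ Ideal.span {x}) (i + 1)).obj M →ₗ[R]
        (localCohomology J (i + 1)).obj M,
      ∀ z, ρ z = 0 → ∃ m : (localCohomology J i).obj M, ∀ (t : R) (l : ℕ),
        x ^ l • t • m = 0 → t • z = 0 := by
  induction i using Nat.twoStepInduction generalizing M with
  | zero =>
    obtain ⟨E, C, ⟨P⟩⟩ := exists_injectiveShortExact M
    obtain ⟨δ', hδ', hk'⟩ := P.exists_connecting_zero (J ⊔ Ideal.span {x})
    obtain ⟨δ, -, hk⟩ := P.exists_connecting_zero J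
    obtain ⟨ρ, hρ⟩ := P.exists_restriction hδ' hk' hk
    refine ⟨ρ, fun z hz => ?_⟩
    obtain ⟨c, rfl⟩ := hδ' z
    rw [hρ, hk] at hz
    obtain ⟨e, he, hec : P.g e = c⟩ := hz
    obtain ⟨-, k, hxc⟩ := Ideal.mem_powerTorsion_sup_span.1 c.2
    obtain ⟨m, hm, hme⟩ := P.exists_f_eq_pow_smul he (hec ▸ hxc)
    have ε := zeroEquivPowerTorsion J M
    refine ⟨ε.symm ⟨m, hm⟩, fun t l h => ?_⟩
    rw [← map_smul, ← map_smul, LinearEquiv.map_eq_zero_iff] at h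
    have h' : x ^ l • t • m = 0 := congr_arg Subtype.val h
    rw [← map_smul, hk']
    refine ⟨t • e, Ideal.mem_powerTorsion_sup_span.2 ⟨Submodule.smul_mem _ _ he, l + k, ?_⟩, ?_⟩
    · rw [pow_add, mul_smul, smul_comm (x ^ k) t, ← hme, ← map_smul, ← map_smul, h', map_zero]
    · rw [map_smul, hec]
      rfl
  | one =>
    obtain ⟨E, C, ⟨P⟩⟩ := exists_injectiveShortExact M
    obtain ⟨E', C', ⟨P'⟩⟩ := exists_injectiveShortExact C
    obtain ⟨δ', hδ', hk'⟩ := P'.exists_connecting_zero (J ⊔ Ideal.span {x})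
    obtain ⟨δ, -, hk⟩ := P'.exists_connecting_zero J
    obtain ⟨ρ, hρ⟩ := P'.exists_restriction hδ' hk' hk
    obtain ⟨ε'⟩ := P.nonempty_equiv (J ⊔ Ideal.span {x}) 0
    obtain ⟨ε⟩ := P.nonempty_equiv J 0
    obtain ⟨δM, -, hkM⟩ := P.exists_connecting_zero J
    have := P.injective
    refine ⟨ε ∘ₗ ρ ∘ₗ ε'.symm, fun z hz => ?_⟩
    obtain ⟨z, rfl⟩ := ε'.surjective z
    simp only [LinearMap.comp_apply, LinearEquiv.coe_coe, LinearEquiv.symm_apply_apply,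
      LinearEquiv.map_eq_zero_iff] at hz
    obtain ⟨c, rfl⟩ := hδ' z
    rw [hρ, hk] at hz
    obtain ⟨e', he', hec : P'.g e' = c⟩ := hz
    obtain ⟨-, k, hxc⟩ := Ideal.mem_powerTorsion_sup_span.1 c.2
    obtain ⟨m, hm, hme⟩ := P'.exists_f_eq_pow_smul he' (hec ▸ hxc)
    refine ⟨δM ⟨m, hm⟩, fun t l h => ?_⟩
    rw [← map_smul, ← map_smul, hkM] at h
    obtain ⟨e, he, hem : P.g e = x ^ l • t • m⟩ := h
    obtain ⟨v, hv, l', hvl⟩ := Ideal.exists_pow_smul_eq_of_injective x he (l + k)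
    rw [← map_smul, ← map_smul, LinearEquiv.map_eq_zero_iff, hk']
    refine ⟨t • e' - P'.f (P.g v), Ideal.mem_powerTorsion_sup_span.2
      ⟨Submodule.sub_mem _ (Submodule.smul_mem _ _ he')
        (Ideal.map_mem_powerTorsion _ (Ideal.map_mem_powerTorsion _ hv)), l + k + l', ?_⟩, ?_⟩
    · have h₁ : x ^ (l + k + l') • t • e' = P'.f (x ^ l' • x ^ l • t • m) := by
        rw [map_smul, map_smul, map_smul, hme]
        simp only [smul_smul]
        ring_nf
      rw [smul_sub, ← map_smul, ← map_smul, hvl, map_smul, hem, h₁, sub_self]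
    · rw [map_sub, map_smul, hec, P'.exact.apply_apply_eq_zero, sub_zero]
      rfl
  | more i _ ih =>
    obtain ⟨E, C, ⟨P⟩⟩ := exists_injectiveShortExact M
    obtain ⟨ρ, hρ⟩ := ih C
    obtain ⟨ε'⟩ := P.nonempty_equiv (J ⊔ Ideal.span {x}) (i + 1)
    obtain ⟨ε⟩ := P.nonempty_equiv J (i + 1)
    obtain ⟨ε₀⟩ := P.nonempty_equiv J i
    refine ⟨ε ∘ₗ ρ ∘ₗ ε'.symm, fun z hz => ?_⟩
    obtain ⟨z, rfl⟩ := ε'.surjective z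
    simp only [LinearMap.comp_apply, LinearEquiv.coe_coe, LinearEquiv.symm_apply_apply,
      LinearEquiv.map_eq_zero_iff] at hz
    obtain ⟨m, hm⟩ := hρ z hz
    refine ⟨ε₀ m, fun t l h => ?_⟩
    rw [← map_smul, ← map_smul, LinearEquiv.map_eq_zero_iff] at h
    rw [← map_smul, hm t l h, map_zero]

/-- The restriction `H^i_(J ⊔ (x))(M) → H^i_J(M)` surjects onto the `x`-power torsion. -/
theorem exists_restriction_range (J : Ideal R) (x : R) (M : ModuleCat.{u} R) (i : ℕ) :
    ∃ ρ : (localCohomology (J ⊔ Ideal.span {x}) i).obj M →ₗ[R] (localCohomology J i).obj M,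
      ∀ y, (∃ k : ℕ, x ^ k • y = 0) → ∃ z, ρ z = y := by
  induction i using Nat.twoStepInduction generalizing M with
  | zero =>
    have ε' := zeroEquivPowerTorsion (J ⊔ Ideal.span {x}) M
    have ε := zeroEquivPowerTorsion J M
    refine ⟨ε.symm ∘ₗ Submodule.inclusion (Ideal.powerTorsion_anti le_sup_left) ∘ₗ ε'.toLinearMap,
      fun y ⟨k, hk⟩ => ?_⟩
    obtain ⟨y, rfl⟩ := ε.symm.surjective y
    rw [← map_smul, LinearEquiv.map_eq_zero_iff] at hk
    refine ⟨ε'.symm ⟨y, Ideal.mem_powerTorsion_sup_span.2 ⟨y.2, k, congr_arg Subtype.val hk⟩⟩, ?_⟩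
    simp only [LinearMap.comp_apply, LinearEquiv.coe_coe, LinearEquiv.apply_symm_apply]
    rfl
  | one =>
    obtain ⟨E, C, ⟨P⟩⟩ := exists_injectiveShortExact M
    obtain ⟨δ', hδ', hk'⟩ := P.exists_connecting_zero (J ⊔ Ideal.span {x})
    obtain ⟨δ, hδ, hk⟩ := P.exists_connecting_zero J
    obtain ⟨ρ, hρ⟩ := P.exists_restriction hδ' hk' hk
    have := P.injective
    refine ⟨ρ, fun y ⟨k, hy⟩ => ?_⟩
    obtain ⟨c, rfl⟩ := hδ y
    rw [← map_smul, hk] at hy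
    obtain ⟨e, he, hec : P.g e = x ^ k • (c : C)⟩ := hy
    obtain ⟨v, hv, l, hvl⟩ := Ideal.exists_pow_smul_eq_of_injective x he k
    have hgv := Ideal.map_mem_powerTorsion P.g hv
    refine ⟨δ' ⟨c - P.g v, Ideal.mem_powerTorsion_sup_span.2
      ⟨Submodule.sub_mem _ c.2 hgv, k + l, ?_⟩⟩, ?_⟩
    · rw [smul_sub, ← map_smul, hvl, map_smul, hec, smul_smul, ← pow_add, add_comm, sub_self]
    · rw [hρ, ← sub_eq_zero, ← map_sub, hk]
      exact ⟨-v, Submodule.neg_mem _ hv, by simp⟩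
  | more i _ ih =>
    obtain ⟨E, C, ⟨P⟩⟩ := exists_injectiveShortExact M
    obtain ⟨ρ, hρ⟩ := ih C
    obtain ⟨ε'⟩ := P.nonempty_equiv (J ⊔ Ideal.span {x}) i
    obtain ⟨ε⟩ := P.nonempty_equiv J i
    refine ⟨ε ∘ₗ ρ ∘ₗ ε'.symm, fun y ⟨k, hk⟩ => ?_⟩
    obtain ⟨y, rfl⟩ := ε.surjective y
    rw [← map_smul, LinearEquiv.map_eq_zero_iff] at hk
    obtain ⟨z, rfl⟩ := hρ y ⟨k, hk⟩
    exact ⟨ε' z, by simp⟩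

end localCohomology

namespace Module

variable {R N : Type*} [CommRing R] [AddCommGroup N] [Module R N]

lemma exists_pow_smul_smul_eq_zero_of_notMem_support {p : PrimeSpectrum R} {x : R}
    (hx : x ∈ p.asIdeal) (h : ∀ q < p, q ∉ support R N) (m : N) :
    ∃ t ∉ p.asIdeal, ∃ l : ℕ, x ^ l • t • m = 0 := by
  by_contra! hcon
  obtain ⟨q, hq, hmq, hdisj⟩ := Ideal.exists_le_prime_disjoint
    (Submodule.span R {m}).annihilator (Submonoid.powers x ⊔ p.asIdeal.primeCompl) <| by
      rw [Set.disjoint_left]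
      intro a ha ha'
      obtain ⟨b, ⟨l, rfl⟩, t, ht, rfl⟩ := Submonoid.mem_sup.1 ha'
      refine hcon t ht l ?_
      rw [smul_smul]
      exact (Submodule.mem_annihilator_span_singleton m _).1 ha
  rw [Set.disjoint_left] at hdisj
  refine h ⟨q, hq⟩ (lt_of_le_of_ne (fun a ha => ?_) ?_)
    (mem_support_iff_exists_annihilator.2 ⟨m, hmq⟩)
  · by_contra hap
    exact hdisj ha (Submonoid.mem_sup_right hap)
  · rintro rfl
    exact hdisj hx (Submonoid.mem_sup_left (Submonoid.mem_powers x))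

lemma exists_pow_smul_eq_zero_of_notMem_support {x : R}
    (h : ∀ p : PrimeSpectrum R, x ∉ p.asIdeal → p ∉ support R N) (m : N) :
    ∃ k : ℕ, x ^ k • m = 0 := by
  have hx : x ∈ (Submodule.span R {m}).annihilator.radical := by
    rw [Ideal.radical_eq_sInf, Submodule.mem_sInf]
    rintro q ⟨hmq, hq⟩
    by_contra hxq
    exact h ⟨q, hq⟩ hxq (mem_support_iff_exists_annihilator.2 ⟨m, hmq⟩)
  exact hx.imp fun k hk => (Submodule.mem_annihilator_span_singleton m _).1 hk

end Module

lemma IsArtinian.exists_pow_smul_eq_zero {R N : Type*} [CommRing R] [IsLocalRing R]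
    [AddCommGroup N] [Module R N] [IsArtinian R N] {x : R}
    (hx : x ∈ IsLocalRing.maximalIdeal R) (m : N) : ∃ k : ℕ, x ^ k • m = 0 := by
  obtain ⟨k, hk⟩ := IsArtinian.monotone_stabilizes
    { toFun := fun j => OrderDual.toDual (Submodule.span R {x ^ j • m})
      monotone' := fun i j hij => by
        obtain ⟨d, rfl⟩ := Nat.exists_eq_add_of_le' hij
        change Submodule.span R {x ^ (d + i) • m} ≤ Submodule.span R {x ^ i • m}
        rw [Submodule.span_singleton_le_iff_mem, pow_add, mul_smul]
        exact Submodule.smul_mem _ _ (Submodule.mem_span_singleton_self _) }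
  have hmem : x ^ k • m ∈ Submodule.span R {x ^ (k + 1) • m} := by
    have h : Submodule.span R {x ^ k • m} = Submodule.span R {x ^ (k + 1) • m} :=
      hk (k + 1) k.le_succ
    exact h ▸ Submodule.mem_span_singleton_self _
  obtain ⟨r, hr⟩ := Submodule.mem_span_singleton.1 hmem
  have hunit : IsUnit (1 - r * x) := by
    by_contra hnu
    have := Ideal.add_mem _ ((IsLocalRing.mem_maximalIdeal _).2 hnu) (Ideal.mul_mem_left _ r hx)
    simp at this
  refine ⟨k, (hunit.smul_eq_zero).1 ?_⟩
  rw [sub_smul, one_smul, mul_smul, smul_smul x, ← pow_succ', hr, sub_self]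

/-- An ideal of coheight one in a Noetherian local ring becomes primary to the maximal ideal after
adding a suitable element. -/
lemma IsLocalRing.exists_radical_sup_span_eq_maximalIdeal {R : Type*} [CommRing R]
    [IsNoetherianRing R] [IsLocalRing R] {K : Ideal R} (hK : ringKrullDim (R ⧸ K) = 1) :
    ∃ x ∈ maximalIdeal R, (K ⊔ Ideal.span {x}).radical = maximalIdeal R := by
  rw [ringKrullDim_quotient] at hK
  have hmax := Order.krullDim_le_one_iff.1 hK.le
  obtain ⟨a, b, hab⟩ := Order.one_le_krullDim_iff.1 hK.ge
  have hfin := K.finite_minimalPrimes_of_isNoetherianRing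
  have hKm : K ≤ maximalIdeal R := a.2.trans (le_maximalIdeal a.1.isPrime.ne_top)
  have hnot : ¬ ((maximalIdeal R : Set R) ⊆ ⋃ p ∈ (hfin.toFinset : Set (Ideal R)), (p : Set R)) := by
    rw [Ideal.subset_union_prime (f := fun p : Ideal R => p) ⊥ ⊥
      fun p hp _ _ => (hfin.mem_toFinset.1 hp).1.1]
    rintro ⟨p, hp, hmp⟩
    rw [hfin.mem_toFinset] at hp
    have ha : p ≤ a.1.asIdeal := hp.2 ⟨a.1.isPrime, a.2⟩
      ((le_maximalIdeal a.1.isPrime.ne_top).trans hmp)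
    exact hab.not_ge ((le_maximalIdeal b.1.isPrime.ne_top).trans (hmp.trans ha))
  obtain ⟨x, hx, hxp⟩ := Set.not_subset.1 hnot
  have hle : K ⊔ Ideal.span {x} ≤ maximalIdeal R :=
    sup_le hKm ((Ideal.span_singleton_le_iff_mem _).2 hx)
  refine ⟨x, hx, le_antisymm ((Ideal.IsPrime.radical_le_iff inferInstance).2 hle) ?_⟩
  rw [Ideal.radical_eq_sInf]
  refine le_sInf fun q ⟨hq, hqp⟩ => ?_
  obtain ⟨p, hp, hpq⟩ := Ideal.exists_minimalPrimes_le (le_sup_left.trans hq)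
  let q' : PrimeSpectrum.zeroLocus (K : Set R) := ⟨⟨q, hqp⟩, le_sup_left.trans hq⟩
  let p' : PrimeSpectrum.zeroLocus (K : Set R) := ⟨⟨p, hp.1.1⟩, hp.1.2⟩
  let m' : PrimeSpectrum.zeroLocus (K : Set R) := ⟨closedPoint R, hKm⟩
  rcases hmax q' with h | h
  · have : q ≤ p := h (b := p') hpq
    refine absurd (this (hq (Ideal.mem_sup_right (Ideal.mem_span_singleton_self x)))) fun hxmem => ?_
    exact hxp (Set.mem_biUnion (by simpa using hp) hxmem)
  · exact h (b := m') (le_maximalIdeal hqp.ne_top)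

namespace localCohomology

variable {R : Type u} [CommRing R] [IsNoetherianRing R]

/-- Grothendieck vanishing, in terms of heights in the support. -/
theorem notMem_support (i : ℕ) (J : Ideal R) (M : ModuleCat.{u} R) (p : PrimeSpectrum R)
    (h : ∀ hp : p ∈ Module.support R M, Order.height (⟨p, hp⟩ : Module.support R M) < i) :
    p ∉ Module.support R ((localCohomology J i).obj M) := by
  induction i generalizing J p with
  | zero =>
    have ε := zeroEquivPowerTorsion J M
    rw [ε.support_eq]
    intro hp
    have hpM := Module.support_subset_of_injective _ (Submodule.injective_subtype _) hp
    exact absurd (h hpM) (by simp)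
  | succ i ih =>
    have hind := Ideal.FG.sup_induction (IsNoetherian.noetherian J)
      (P := fun K => p ∉ Module.support R ((localCohomology K (i + 1)).obj M)) (J₀ := ⊥)
    rw [bot_sup_eq] at hind
    refine hind ?_ fun K x _ hK => ?_
    · have := subsingleton_bot M i
      simp [Module.support_eq_empty]
    · by_cases hx : x ∈ p.asIdeal
      · have hq : ∀ q < p, q ∉ Module.support R ((localCohomology K i).obj M) := by
          intro q hqp
          refine ih K q fun hqM => ?_
          have hpM := Module.mem_support_mono hqp.le hqM
          have h₁ := Order.height_add_one_le
            (show (⟨q, hqM⟩ : Module.support R M) < ⟨p, hpM⟩ from hqp)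
          have h₂ := h₁.trans_lt (h hpM)
          rw [Nat.cast_add, Nat.cast_one] at h₂
          exact lt_of_add_lt_add_right h₂
        rw [Module.notMem_support_iff'] at hK ⊢
        intro z
        obtain ⟨ρ, hρ⟩ := exists_restriction_ker K x M i
        obtain ⟨r, hr, hrz⟩ := hK (ρ z)
        obtain ⟨m, hm⟩ := hρ (r • z) (by rw [map_smul, hrz])
        obtain ⟨t, ht, l, htl⟩ := Module.exists_pow_smul_smul_eq_zero_of_notMem_support hx hq m
        refine ⟨t * r, p.asIdeal.primeCompl.mul_mem ht hr, ?_⟩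
        rw [mul_smul, hm t l htl]
      · rw [Module.notMem_support_iff']
        intro z
        obtain ⟨k, hk⟩ := exists_pow_smul_eq_zero
          (Ideal.mem_sup_right (S := K) (Ideal.mem_span_singleton_self x)) M (i + 1) z
        exact ⟨x ^ k, fun hmem => hx (p.isPrime.mem_of_pow_mem k hmem), hk⟩

lemma exists_pow_smul_eq_zero_of_mem_annihilator {M : ModuleCat.{u} R} {a : R}
    (ha : a ∈ Module.annihilator R M) (J : Ideal R) (i : ℕ) (y : (localCohomology J i).obj M) :
    ∃ k : ℕ, a ^ k • y = 0 :=
  Module.exists_pow_smul_eq_zero_of_notMem_support (fun p hap => notMem_support i J M p fun hp =>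
    absurd (Module.annihilator_le_of_mem_support hp ha) hap) y

lemma exists_surjective_of_sup_span {J : Ideal R} {x : R} {M : ModuleCat.{u} R} {i : ℕ}
    (h : ∀ y : (localCohomology J i).obj M, ∃ k : ℕ, x ^ k • y = 0) :
    ∃ ρ : (localCohomology (J ⊔ Ideal.span {x}) i).obj M →ₗ[R] (localCohomology J i).obj M,
      Function.Surjective ρ :=
  (exists_restriction_range J x M i).imp fun _ hρ y => hρ y (h y)

lemma exists_injective_of_sup_span {J : Ideal R} {x : R} {M : ModuleCat.{u} R} {i : ℕ}
    (h : ∀ y : (localCohomology J i).obj M, ∃ k : ℕ, x ^ k • y = 0) :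
    ∃ ρ : (localCohomology (J ⊔ Ideal.span {x}) (i + 1)).obj M →ₗ[R]
      (localCohomology J (i + 1)).obj M, Function.Injective ρ := by
  obtain ⟨ρ, hρ⟩ := exists_restriction_ker J x M i
  refine ⟨ρ, (injective_iff_map_eq_zero ρ).2 fun z hz => ?_⟩
  obtain ⟨m, hm⟩ := hρ z hz
  obtain ⟨k, hk⟩ := h m
  rw [← one_smul R z, hm 1 k (by rw [one_smul, hk])]

lemma exists_surjective_of_sup_annihilator (I : Ideal R) (M : ModuleCat.{u} R) (i : ℕ) :
    ∃ ρ : (localCohomology (I ⊔ Module.annihilator R M) i).obj M →ₗ[R]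
      (localCohomology I i).obj M, Function.Surjective ρ := by
  refine Ideal.FG.sup_induction (IsNoetherian.noetherian (Module.annihilator R M))
    (P := fun K => ∃ ρ : (localCohomology K i).obj M →ₗ[R]
      (localCohomology I i).obj M, Function.Surjective ρ)
    ⟨LinearMap.id, Function.surjective_id⟩ fun K a ha ⟨ρ, hρ⟩ => ?_
  obtain ⟨ρ', hρ'⟩ := exists_surjective_of_sup_span
    (exists_pow_smul_eq_zero_of_mem_annihilator ha K i)
  exact ⟨ρ ∘ₗ ρ', hρ.comp hρ'⟩

lemma exists_injective_of_sup_annihilator (I : Ideal R) (M : ModuleCat.{u} R) (i : ℕ) :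
    ∃ ρ : (localCohomology (I ⊔ Module.annihilator R M) i).obj M →ₗ[R]
      (localCohomology I i).obj M, Function.Injective ρ := by
  refine Ideal.FG.sup_induction (IsNoetherian.noetherian (Module.annihilator R M))
    (P := fun K => ∃ ρ : (localCohomology K i).obj M →ₗ[R]
      (localCohomology I i).obj M, Function.Injective ρ)
    ⟨LinearMap.id, Function.injective_id⟩ fun K a ha ⟨ρ, hρ⟩ => ?_
  obtain ⟨ρ', hρ'⟩ : ∃ ρ : (localCohomology (K ⊔ Ideal.span {a}) i).obj M →ₗ[R]
      (localCohomology K i).obj M, Function.Injective ρ := by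
    cases i with
    | zero =>
      have ε := zeroEquivPowerTorsion (K ⊔ Ideal.span {a}) M
      have ε' := zeroEquivPowerTorsion K M
      refine ⟨ε'.symm ∘ₗ Submodule.inclusion (Ideal.powerTorsion_anti le_sup_left) ∘ₗ
        ε.toLinearMap, ?_⟩
      exact ε'.symm.injective.comp ((Submodule.inclusion_injective
        (Ideal.powerTorsion_anti le_sup_left)).comp ε.injective)
    | succ i =>
      exact exists_injective_of_sup_span (exists_pow_smul_eq_zero_of_mem_annihilator ha K i)
  exact ⟨ρ ∘ₗ ρ', hρ.comp hρ'⟩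

lemma subsingleton_of_krullDim_lt (J : Ideal R) (M : ModuleCat.{u} R) {i : ℕ}
    (h : Order.krullDim (Module.support R M) < (i : WithBot ℕ∞)) :
    Subsingleton ((localCohomology J i).obj M) := by
  rw [← Module.support_eq_empty_iff (R := R), Set.eq_empty_iff_forall_notMem]
  refine fun p => notMem_support i J M p fun hp => ?_
  exact_mod_cast (Order.height_le_krullDim _).trans_lt h

lemma exists_pow_smul_eq_zero_of_krullDim_le [IsLocalRing R] (J : Ideal R) (M : ModuleCat.{u} R)
    {i : ℕ} (h : Order.krullDim (Module.support R M) ≤ (i : WithBot ℕ∞)) {x : R}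
    (hx : x ∈ IsLocalRing.maximalIdeal R) (y : (localCohomology J i).obj M) :
    ∃ k : ℕ, x ^ k • y = 0 := by
  refine Module.exists_pow_smul_eq_zero_of_notMem_support (fun p hxp => ?_) y
  refine notMem_support i J M p fun hp => ?_
  have hlt : p < IsLocalRing.closedPoint R :=
    lt_of_le_of_ne (IsLocalRing.le_maximalIdeal p.isPrime.ne_top) (by rintro rfl; exact hxp hx)
  have h₁ := Order.height_add_one_le (show (⟨p, hp⟩ : Module.support R M) <
    ⟨IsLocalRing.closedPoint R, Module.mem_support_mono hlt.le hp⟩ from hlt)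
  have h₂ : Order.height (⟨IsLocalRing.closedPoint R, Module.mem_support_mono hlt.le hp⟩ :
      Module.support R M) ≤ (i : ℕ∞) := by
    exact_mod_cast (Order.height_le_krullDim _).trans h
  exact (ENat.add_one_le_iff (ne_top_of_le_ne_top (ENat.natCast_ne_top i)
    (le_self_add.trans (h₁.trans h₂)))).1 (h₁.trans h₂)

end localCohomology

/-- over a Noetherian local ring, if `M` has Krull dimension `n` with
`H^n_m(M)` nonzero and Artinian, and `dim (R/(I + Ann M)) = 1`, then `H^{cd(I,M)}_I(M)` is
Artinian if and only if `cd(I,M) = n`. -/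
theorem isArtinian_top_localCohomology_iff_cd_eq_dim
    (R : Type u) [CommRing R] [IsNoetherianRing R] [IsLocalRing R]
    (M : ModuleCat.{u} R) (n : ℕ)
    (hn : Order.krullDim (Module.support R M) = (n : WithBot ℕ∞))
    (hne : Nontrivial ((localCohomology (IsLocalRing.maximalIdeal R) n).obj M))
    (hart : IsArtinian R ((localCohomology (IsLocalRing.maximalIdeal R) n).obj M))
    (I : Ideal R)
    (hd : ringKrullDim (R ⧸ (I + Module.annihilator R M)) = (1 : WithBot ℕ∞))
    (c : ℕ) (hc : cohomologicalDimension I M = (c : ℕ∞)) :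
    IsArtinian R ((localCohomology I c).obj M) ↔ c = n := by
  obtain ⟨x, hx, hrad⟩ := IsLocalRing.exists_radical_sup_span_eq_maximalIdeal hd
  rw [Submodule.add_eq_sup] at hrad
  set K := I ⊔ Module.annihilator R M
  have ε : (localCohomology (IsLocalRing.maximalIdeal R) n).obj M ≃ₗ[R]
      (localCohomology (K ⊔ Ideal.span {x}) n).obj M :=
    ((localCohomology.isoOfSameRadical (by
      rw [hrad, Ideal.IsPrime.radical inferInstance]) n).app M).toLinearEquiv
  constructor
  · intro hA
    have hle : ∀ i : ℕ, Nontrivial ((localCohomology I i).obj M) → i ≤ c := by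
      intro i hi
      have : (i : ℕ∞) ≤ c := hc ▸ le_sSup ⟨i, rfl, hi⟩
      exact_mod_cast this
    have hcn : c ≤ n := by
      have : (c : ℕ∞) ≤ n := by
        rw [← hc]
        refine sSup_le ?_
        rintro _ ⟨i, rfl, hi⟩
        by_contra! hlt
        have := localCohomology.subsingleton_of_krullDim_lt I M (i := i)
          (by rw [hn]; exact_mod_cast hlt)
        exact not_subsingleton _ this
      exact_mod_cast this
    by_contra hne'
    have hlt : c < n := lt_of_le_of_ne hcn hne'
    have hzero : ∀ i, c < i → Subsingleton ((localCohomology I i).obj M) := fun i hi =>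
      not_nontrivial_iff_subsingleton.1 fun h => hi.not_ge (hle i h)
    obtain ⟨d, rfl⟩ := Nat.exists_eq_succ_of_ne_zero (Nat.ne_zero_of_lt hlt)
    have htors : ∀ y : (localCohomology I d).obj M, ∃ k : ℕ, x ^ k • y = 0 := by
      rcases (Nat.lt_succ_iff.1 hlt).eq_or_lt with rfl | hcd
      · exact IsArtinian.exists_pow_smul_eq_zero hx
      · have := hzero d hcd
        exact fun y => ⟨0, Subsingleton.elim _ _⟩
    obtain ⟨ρ, hρ⟩ := localCohomology.exists_injective_of_sup_annihilator I M d
    obtain ⟨ρ₁, hρ₁⟩ := localCohomology.exists_injective_of_sup_annihilator I M (d + 1)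
    obtain ⟨ρ₂, hρ₂⟩ := localCohomology.exists_injective_of_sup_span (J := K) (x := x) (M := M)
      (i := d) fun y => (htors (ρ y)).imp fun k hk => hρ (by rw [map_smul, hk, map_zero])
    have := hzero (d + 1) hlt
    have := (hρ₁.comp (hρ₂.comp ε.injective)).subsingleton
    exact not_subsingleton _ this
  · rintro rfl
    obtain ⟨ρ, hρ⟩ := localCohomology.exists_surjective_of_sup_annihilator I M c
    obtain ⟨ρ', hρ'⟩ := localCohomology.exists_surjective_of_sup_span
      (localCohomology.exists_pow_smul_eq_zero_of_krullDim_le K M hn.le hx)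
    exact isArtinian_of_surjective _ (ρ ∘ₗ ρ' ∘ₗ ε.toLinearMap)
      (hρ.comp (hρ'.comp ε.surjective))
end

section
/- Let (R, m) be a commutative Noetherian local ring and M an R-module of Krull dimension n such that H^n_m(M) is nonzero and Artinian, and let I be an ideal of R with dim(R/(I + Ann M)) = 2, where Ann M is the annihilator of M. If the top local cohomology module H^{cd(I,M)}_I(M) is Artinian, then either cd(I,M) = n, or cd(I,M) = n − 1 and H^2_m(H^{n−2}_I(M)) ≠ 0. -/
universe u

open CategoryTheory

namespace HomologicalComplex
variable {R : Type*} [Ring R] {ι : Type*} {c : ComplexShape ι}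
  (K L : HomologicalComplex (ModuleCat R) c) (i j : ι)

/-- The homology class of a cycle, as a linear map on the kernel of the differential. -/
noncomputable def kerToHomology (hij : c.next i = j) :
    LinearMap.ker (K.d i j).hom →ₗ[R] K.homology i :=
  (K.liftCycles (A := ModuleCat.of R (LinearMap.ker (K.d i j).hom))
    (ModuleCat.ofHom (LinearMap.ker (K.d i j).hom).subtype) j hij
    (by ext x; exact x.2) ≫ K.homologyπ i).hom

lemma exists_liftCycles (hij : c.next i = j) (x : LinearMap.ker (K.d i j).hom) :
    ∃ z : K.cycles i, K.iCycles i z = x.1 ∧ K.kerToHomology i j hij x = K.homologyπ i z := by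
  refine ⟨K.liftCycles (A := ModuleCat.of R (LinearMap.ker (K.d i j).hom))
    (ModuleCat.ofHom (LinearMap.ker (K.d i j).hom).subtype) j hij
    (by ext x; exact x.2) x, ?_, rfl⟩
  exact congr($(K.liftCycles_i (A := ModuleCat.of R (LinearMap.ker (K.d i j).hom))
    (ModuleCat.ofHom (LinearMap.ker (K.d i j).hom).subtype) j hij (by ext x; exact x.2)) x)

lemma iCycles_injective : Function.Injective (K.iCycles i) :=
  (ModuleCat.mono_iff_injective _).1 inferInstance

lemma kerToHomology_eq (hij : c.next i = j) (x : LinearMap.ker (K.d i j).hom) (z : K.cycles i)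
    (hz : K.iCycles i z = x.1) : K.kerToHomology i j hij x = K.homologyπ i z := by
  obtain ⟨z', hz', h⟩ := K.exists_liftCycles i j hij x
  rw [h, K.iCycles_injective i (hz'.trans hz.symm)]

lemma kerToHomology_surjective (hij : c.next i = j) :
    Function.Surjective (K.kerToHomology i j hij) := by
  intro y
  obtain ⟨z, rfl⟩ := (ModuleCat.epi_iff_surjective (K.homologyπ i)).1 inferInstance y
  refine ⟨⟨K.iCycles i z, ?_⟩, K.kerToHomology_eq i j hij _ z rfl⟩
  exact congr($(K.iCycles_d i j) z)

lemma kerToHomology_eq_zero_iff (hij : c.next i = j) (k : ι) (hk : c.prev i = k)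
    (x : LinearMap.ker (K.d i j).hom) :
    K.kerToHomology i j hij x = 0 ↔ ∃ y, K.d k i y = x.1 := by
  obtain ⟨z, hz, h⟩ := K.exists_liftCycles i j hij x
  have ht (y) : K.iCycles i (K.toCycles k i y) = K.d k i y := congr($(K.toCycles_i k i) y)
  rw [h]
  constructor
  · intro h0
    have := ShortComplex.exact_of_g_is_cokernel
      (ShortComplex.mk (K.toCycles k i) (K.homologyπ i) (by simp)) (K.homologyIsCokernel k i hk)
    obtain ⟨y, hy⟩ := (ShortComplex.moduleCat_exact_iff _).1 this z h0
    refine ⟨y, ?_⟩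
    rw [← ht, ← hz]
    exact congrArg _ hy
  · rintro ⟨y, hy⟩
    rw [← ht, ← hz] at hy
    rw [← K.iCycles_injective i hy]
    exact congr($(K.toCycles_comp_homologyπ k i) y)

variable {K L}
lemma homologyMap_kerToHomology (φ : K ⟶ L) (hij : c.next i = j) (x : LinearMap.ker (K.d i j).hom)
    (y : LinearMap.ker (L.d i j).hom) (h : φ.f i x.1 = y.1) :
    homologyMap φ i (K.kerToHomology i j hij x) = L.kerToHomology i j hij y := by
  obtain ⟨z, hz, hx⟩ := K.exists_liftCycles i j hij x
  rw [hx, L.kerToHomology_eq i j hij y (cyclesMap φ i z)]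
  · exact congr($(homologyπ_naturality φ i) z)
  · rw [← h, ← hz]
    exact congr($(cyclesMap_i φ i) z)
end HomologicalComplex

namespace CategoryTheory.ProjectiveResolution
universe v w t
variable (R : Type t) [CommRing R] {C : Type u} [Category.{v} C] [Abelian C] [Linear R C]
  {X : C} (P : ProjectiveResolution X) (Y : C) (n : ℕ)

/-- The module of degree `n` cocycles on a projective resolution with values in `Y`. -/
def cocycles : Submodule R (P.complex.X n ⟶ Y) :=
  LinearMap.ker (Linear.leftComp R Y (P.complex.d (n + 1) n))

variable {R Y n} in
lemma mem_cocycles {f : P.complex.X n ⟶ Y} :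
    f ∈ P.cocycles R Y n ↔ P.complex.d (n + 1) n ≫ f = 0 := Iff.rfl

section
variable [HasExt.{w} C]

lemma extMk_eq_zero_iff_of_degree_zero (f : P.complex.X 0 ⟶ Y)
    (hf : P.complex.d 1 0 ≫ f = 0) : P.extMk f 1 rfl hf = 0 ↔ f = 0 := by
  refine ⟨fun h => ?_, fun h => by subst h; exact P.extMk_zero 1 rfl⟩
  rw [← P.extEquivCohomologyClass.apply_eq_iff_eq,
    extEquivCohomologyClass_extMk, extEquivCohomologyClass_zero,
    CochainComplex.HomComplex.CohomologyClass.mk_eq_zero_iff] at h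
  rw [CochainComplex.HomComplex.Cocycle.toSingleMk_mem_coboundaries_iff _ _ _ _ _ 1 (by lia)] at h
  obtain ⟨g, hg⟩ := h
  have hz : Limits.IsZero (P.cochainComplex.X 1) :=
    CochainComplex.isZero_of_isStrictlyLE _ 0 1 (by simp)
  rw [hz.eq_of_src g 0, Limits.comp_zero] at hg
  rw [← cancel_epi (P.cochainComplexXIso (-(0 : ℕ)) 0 rfl).hom, Limits.comp_zero]
  exact hg.symm

/-- The class in `Abelian.Ext` of a cocycle on a projective resolution, as a linear map. -/
noncomputable def cocyclesToAbelianExt : P.cocycles R Y n →ₗ[R] Abelian.Ext X Y n where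
  toFun f := P.extMk f.1 (n + 1) rfl f.2
  map_add' x y := (P.add_extMk _ _ _ _ _ _).symm
  map_smul' r x := by
    rw [Abelian.Ext.smul_eq_comp_mk₀, RingHom.id_apply]
    refine Eq.trans ?_ (P.extMk_comp_mk₀ x.1 (n + 1) rfl x.2 (r • 𝟙 Y)).symm
    congr 1
    rw [Linear.comp_smul, Category.comp_id]
    rfl

lemma cocyclesToAbelianExt_surjective : Function.Surjective (P.cocyclesToAbelianExt R Y n) := by
  intro x
  obtain ⟨f, hf, rfl⟩ := P.extMk_surjective x (n + 1) rfl
  exact ⟨⟨f, hf⟩, rfl⟩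
end

section
variable [EnoughProjectives C]

/-- The class in `Ext` of a cocycle on a projective resolution, as a linear map. -/
noncomputable def cocyclesToExt :
    P.cocycles R Y n →ₗ[R] ((_root_.Ext R C n).obj (Opposite.op X)).obj Y :=
  (P.isoExt n Y).inv.hom ∘ₗ
    ((P.complex.linearYonedaObj R Y).kerToHomology n (n + 1) (by simp) :)

lemma cocyclesToExt_surjective : Function.Surjective (P.cocyclesToExt R Y n) :=
  ((P.isoExt n Y).symm.toLinearEquiv.surjective).comp
    (HomologicalComplex.kerToHomology_surjective _ _ _ _)

lemma cocyclesToExt_eq_zero_iff_kerToHomology (f : P.cocycles R Y n) :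
    P.cocyclesToExt R Y n f = 0 ↔
      (P.complex.linearYonedaObj R Y).kerToHomology n (n + 1) (by simp) f = 0 :=
  (P.isoExt (R := R) n Y).symm.toLinearEquiv.map_eq_zero_iff

lemma ker_cocyclesToExt_eq [HasExt.{w} C] :
    LinearMap.ker (P.cocyclesToExt R Y n) = LinearMap.ker (P.cocyclesToAbelianExt R Y n) := by
  ext f
  rw [LinearMap.mem_ker, LinearMap.mem_ker, cocyclesToExt_eq_zero_iff_kerToHomology]
  cases n with
  | zero =>
    refine (HomologicalComplex.kerToHomology_eq_zero_iff _ _ _ _ 0 (by simp) _).trans ?_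
    refine Iff.trans ?_ (P.extMk_eq_zero_iff_of_degree_zero Y f.1 f.2).symm
    constructor
    · rintro ⟨y, hy⟩
      rw [HomologicalComplex.shape _ _ _ (by simp)] at hy
      exact hy.symm
    · intro h
      exact ⟨0, by rw [map_zero]; exact h.symm⟩
  | succ n =>
    refine (HomologicalComplex.kerToHomology_eq_zero_iff _ _ _ _ n (by simp) _).trans ?_
    exact (P.extMk_eq_zero_iff f.1 (n + 2) rfl f.2 n rfl).symm

/-- The comparison between the two models of `Ext`, for a given projective resolution. -/
noncomputable def abelianExtEquivExt [HasExt.{w} C] :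
    Abelian.Ext X Y n ≃ₗ[R] ((_root_.Ext R C n).obj (Opposite.op X)).obj Y :=
  ((LinearMap.quotKerEquivOfSurjective _ (P.cocyclesToAbelianExt_surjective R Y n)).symm.trans
    (Submodule.quotEquivOfEq _ _ (P.ker_cocyclesToExt_eq R Y n).symm)).trans
    (LinearMap.quotKerEquivOfSurjective _ (P.cocyclesToExt_surjective R Y n))

lemma abelianExtEquivExt_cocyclesToAbelianExt [HasExt.{w} C] (f : P.cocycles R Y n) :
    P.abelianExtEquivExt R Y n (P.cocyclesToAbelianExt R Y n f) = P.cocyclesToExt R Y n f := by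
  have : (LinearMap.quotKerEquivOfSurjective _ (P.cocyclesToAbelianExt_surjective R Y n)).symm
      (P.cocyclesToAbelianExt R Y n f) = Submodule.Quotient.mk f := by
    rw [LinearEquiv.symm_apply_eq]
    rfl
  simp [abelianExtEquivExt, this]

lemma map_cocyclesToExt {X' : C} {g : X' ⟶ X} {P' : ProjectiveResolution X'} (φ : Hom P' P g)
    (f : P.cocycles R Y n) (f' : P'.cocycles R Y n) (h : φ.hom.f n ≫ f.1 = f'.1) :
    ((_root_.Ext R C n).map g.op).app Y (P.cocyclesToExt R Y n f) =
      P'.cocyclesToExt R Y n f' := by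
  let F := ((linearYoneda R C).obj Y).rightOp
  let ψ : P.complex.linearYonedaObj R Y ⟶ P'.complex.linearYonedaObj R Y :=
    (HomologicalComplex.unopFunctor (ModuleCat R) _).map
      ((F.mapHomologicalComplex _).map φ.hom).op
  have key : (P.isoExt (R := R) n Y).inv ≫ ((_root_.Ext R C n).map g.op).app Y =
      HomologicalComplex.homologyMap ψ n ≫ (P'.isoExt (R := R) n Y).inv := by
    have h1 := P'.isoLeftDerivedObj_hom_naturality g P φ.hom (by simpa using φ.hom_f_zero_comp_π_f_zero) F n
    have h2 := HomologicalComplex.homologyOp_hom_naturality ψ n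
    have h3 : (F.leftDerived n).map g ≫ (P.isoLeftDerivedObj F n).hom ≫
          (HomologicalComplex.homologyOp (P.complex.linearYonedaObj R Y) n).hom =
        (P'.isoLeftDerivedObj F n).hom ≫
          (HomologicalComplex.homologyOp (P'.complex.linearYonedaObj R Y) n).hom ≫
            (HomologicalComplex.homologyMap ψ n).op :=
      ((reassoc_of% h1) _).trans (congrArg ((P'.isoLeftDerivedObj F n).hom ≫ ·) h2)
    exact congrArg Quiver.Hom.unop h3
  have h3 := congr($key ((P.complex.linearYonedaObj R Y).kerToHomology n (n + 1) (by simp) f))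
  refine h3.trans ?_
  have h4 := HomologicalComplex.homologyMap_kerToHomology n (n+1) ψ (by simp) f f' h
  exact congrArg (P'.isoExt (R := R) n Y).inv h4

lemma map_abelianExtEquivExt [HasExt.{w} C] {X' : C} (g : X' ⟶ X) (P' : ProjectiveResolution X')
    (x : Abelian.Ext X Y n) :
    ((_root_.Ext R C n).map g.op).app Y (P.abelianExtEquivExt R Y n x) =
      P'.abelianExtEquivExt R Y n ((Abelian.Ext.mk₀ g).comp x (zero_add n)) := by
  let φ : Hom P' P g := ⟨lift g P' P, by simpa using lift_commutes_zero g P' P⟩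
  obtain ⟨f, rfl⟩ := P.cocyclesToAbelianExt_surjective R Y n x
  have hf' : φ.hom.f n ≫ f.1 ∈ P'.cocycles R Y n := by
    rw [mem_cocycles, ← φ.hom.comm_assoc, (P.mem_cocycles).1 f.2, Limits.comp_zero]
  have h := mk₀_comp_extMk f.1 (n + 1) rfl f.2 φ
  rw [abelianExtEquivExt_cocyclesToAbelianExt,
    P.map_cocyclesToExt R Y n φ f ⟨_, hf'⟩ rfl, ← abelianExtEquivExt_cocyclesToAbelianExt]
  exact congrArg _ h.symm
end
end CategoryTheory.ProjectiveResolution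

namespace localCohomology
variable {R : Type u} [CommRing R]

/-- The projection `R ⧸ I ^ t ⟶ R ⧸ I ^ s` for `s ≤ t`. -/
noncomputable def quotientPowMap (I : Ideal R) {s t : ℕ} (h : s ≤ t) :
    ModuleCat.of R (R ⧸ I ^ t) ⟶ ModuleCat.of R (R ⧸ I ^ s) :=
  ModuleCat.ofHom (Submodule.mapQ _ _ LinearMap.id (Ideal.pow_le_pow_right h))

lemma quotientPowMap_comp (I : Ideal R) {r s t : ℕ} (h : r ≤ s) (h' : s ≤ t) :
    quotientPowMap I h' ≫ quotientPowMap I h = quotientPowMap I (h.trans h') := by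
  ext
  rfl

/-- Restriction of `Ext`-classes along `R ⧸ I ^ t ⟶ R ⧸ I ^ s`. -/
noncomputable def res (I : Ideal R) {s t : ℕ} (h : s ≤ t) {M : ModuleCat.{u} R} {i : ℕ}
    (x : Abelian.Ext (ModuleCat.of R (R ⧸ I ^ s)) M i) :
    Abelian.Ext (ModuleCat.of R (R ⧸ I ^ t)) M i :=
  (Abelian.Ext.mk₀ (quotientPowMap I h)).comp x (zero_add i)

/-- The structure exhibiting a module `H` as the direct limit of `Ext^i(R ⧸ I ^ t, M)`. -/
structure Model (I : Ideal R) (i : ℕ) (M : ModuleCat.{u} R) (H : Type u) [AddCommGroup H]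
    [Module R H] where
  /-- The canonical maps to the direct limit. -/
  ι (t : ℕ) : Abelian.Ext (ModuleCat.of R (R ⧸ I ^ t)) M i →ₗ[R] H
  ι_res {s t : ℕ} (h : s ≤ t) (x : Abelian.Ext (ModuleCat.of R (R ⧸ I ^ s)) M i) :
    ι t (res I h x) = ι s x
  exists_rep (y : H) : ∃ t x, ι t x = y
  exists_res_eq_zero {s : ℕ} (x : Abelian.Ext (ModuleCat.of R (R ⧸ I ^ s)) M i) :
    ι s x = 0 → ∃ t, ∃ h : s ≤ t, res I h x = 0

open Limits in
/-- `localCohomology I i` is the direct limit of the groups `Abelian.Ext`. -/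
noncomputable def model (I : Ideal R) (i : ℕ) (M : ModuleCat.{u} R) :
    Model I i M ((localCohomology I i).obj M) :=
  let F := diagram (idealPowersDiagram I) i
  let G := F ⋙ (evaluation _ _).obj M
  let c : Cocone G := ((evaluation _ _).obj M).mapCocone (colimit.cocone F)
  have hc : IsColimit c := isColimitOfPreserves _ (colimit.isColimit F)
  have : PreservesColimitsOfShape ℕᵒᵖᵒᵖ (forget (ModuleCat.{u} R)) :=
    have := preservesFilteredColimitsOfSize_shrink.{0, u, 0, u} (forget (ModuleCat.{u} R))
    PreservesFilteredColimitsOfSize.preserves_filtered_colimits _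
  let e (t : ℕ) := (projectiveResolution (ModuleCat.of R (R ⧸ I ^ t))).abelianExtEquivExt R M i
  have he {s t : ℕ} (h : s ≤ t) (x) : G.map (homOfLE h).op.op (e s x) = e t (res I h x) :=
    ProjectiveResolution.map_abelianExtEquivExt R _ M i (quotientPowMap I h) _ x
  { ι t := (c.ι.app (.op (.op t))).hom ∘ₗ (e t).toLinearMap
    ι_res {s t} h x := by
      have := congr($(c.w (homOfLE h).op.op) (e s x))
      refine Eq.trans ?_ this
      exact congrArg (c.ι.app (.op (.op t))) (he h x).symm
    exists_rep y := by
      obtain ⟨j, x, hx⟩ := Concrete.isColimit_exists_rep G hc y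
      refine ⟨j.unop.unop, (e _).symm x, ?_⟩
      refine Eq.trans ?_ hx
      exact congrArg (c.ι.app j) ((e _).apply_symm_apply x)
    exists_res_eq_zero {s} x hx := by
      have h0 : c.ι.app (.op (.op s)) (e s x) = c.ι.app (.op (.op s)) 0 :=
        Eq.trans hx (map_zero _).symm
      obtain ⟨k, f, g, h⟩ := Concrete.isColimit_exists_of_rep_eq G hc _ _ h0
      refine ⟨k.unop.unop, leOfHom f.unop.unop, (e _).map_eq_zero_iff.1 ?_⟩
      rw [← he]
      exact h.trans (map_zero _) }

end localCohomology

namespace localCohomology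
variable {R : Type u} [CommRing R] (I : Ideal R)

section res
variable {M N : ModuleCat.{u} R} {i j k : ℕ}

lemma res_res {r s t : ℕ} (h : r ≤ s) (h' : s ≤ t)
    (x : Abelian.Ext (ModuleCat.of R (R ⧸ I ^ r)) M i) :
    res I h' (res I h x) = res I (h.trans h') x := by
  simp only [res, ← Abelian.Ext.comp_assoc_of_second_deg_zero, Abelian.Ext.mk₀_comp_mk₀,
    quotientPowMap_comp]

lemma res_comp {s t : ℕ} (h : s ≤ t) (x : Abelian.Ext (ModuleCat.of R (R ⧸ I ^ s)) M i)
    (y : Abelian.Ext M N j) (hk : i + j = k) :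
    res I h (x.comp y hk) = (res I h x).comp y hk :=
  (Abelian.Ext.comp_assoc _ _ _ (zero_add i) hk (by lia)).symm

@[simp]
lemma res_zero {s t : ℕ} (h : s ≤ t) :
    res I h (0 : Abelian.Ext (ModuleCat.of R (R ⧸ I ^ s)) M i) = 0 := by
  simp [res]
end res

/-- The vanishing of the local cohomology module `H^i_I(M)`, in terms of `Ext`-classes. -/
def Vanishes (i : ℕ) (M : ModuleCat.{u} R) : Prop :=
  ∀ (s : ℕ) (x : Abelian.Ext (ModuleCat.of R (R ⧸ I ^ s)) M i), ∃ t, ∃ h : s ≤ t, res I h x = 0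

variable {I}

lemma Model.subsingleton_iff {i : ℕ} {M : ModuleCat.{u} R} {H : Type u} [AddCommGroup H]
    [Module R H] (m : Model I i M H) : Subsingleton H ↔ Vanishes I i M := by
  constructor
  · intro _ s x
    exact m.exists_res_eq_zero x (Subsingleton.elim _ _)
  · intro h
    refine subsingleton_of_forall_eq 0 fun y => ?_
    obtain ⟨s, x, rfl⟩ := m.exists_rep y
    obtain ⟨t, hst, hx⟩ := h s x
    rw [← m.ι_res hst, hx, map_zero]

lemma nontrivial_iff_not_vanishes {i : ℕ} {M : ModuleCat.{u} R} :
    Nontrivial ((localCohomology I i).obj M) ↔ ¬ Vanishes I i M := by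
  rw [← (model I i M).subsingleton_iff, not_subsingleton_iff_nontrivial]

lemma vanishes_succ_of_injective {i : ℕ} (M : ModuleCat.{u} R) [Injective M] :
    Vanishes I (i + 1) M :=
  fun s x => ⟨s, le_rfl, by rw [x.eq_zero_of_injective, res_zero]⟩

section ShortExact
variable {S : ShortComplex (ModuleCat.{u} R)} (hS : S.ShortExact) {i : ℕ}
include hS

lemma Vanishes.middle (h₁ : Vanishes I i S.X₁) (h₃ : Vanishes I i S.X₃) :
    Vanishes I i S.X₂ := by
  intro s x
  obtain ⟨t, hst, hx⟩ := h₃ s (x.comp (.mk₀ S.g) (add_zero i))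
  rw [res_comp] at hx
  obtain ⟨y, hy⟩ := Abelian.Ext.covariant_sequence_exact₂ _ hS _ hx
  obtain ⟨r, htr, hr⟩ := h₁ t y
  refine ⟨r, hst.trans htr, ?_⟩
  rw [← res_res I hst htr, ← hy, res_comp, hr, Abelian.Ext.zero_comp]

lemma Vanishes.left (h₃ : Vanishes I i S.X₃) (h₂ : Vanishes I (i + 1) S.X₂) :
    Vanishes I (i + 1) S.X₁ := by
  intro s x
  obtain ⟨t, hst, hx⟩ := h₂ s (x.comp (.mk₀ S.f) (add_zero _))
  rw [res_comp] at hx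
  obtain ⟨y, hy⟩ := Abelian.Ext.covariant_sequence_exact₁ _ hS _ hx rfl
  obtain ⟨r, htr, hr⟩ := h₃ t y
  refine ⟨r, hst.trans htr, ?_⟩
  rw [← res_res I hst htr, ← hy, res_comp, hr, Abelian.Ext.zero_comp]

lemma Vanishes.right (h₁ : Vanishes I (i + 1) S.X₁) (h₂ : Vanishes I i S.X₂) :
    Vanishes I i S.X₃ := by
  intro s x
  obtain ⟨t, hst, hx⟩ := h₁ s (x.comp hS.extClass rfl)
  rw [res_comp] at hx
  obtain ⟨y, hy⟩ := Abelian.Ext.covariant_sequence_exact₃ _ hS _ rfl hx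
  obtain ⟨r, htr, hr⟩ := h₂ t y
  refine ⟨r, hst.trans htr, ?_⟩
  rw [← res_res I hst htr, ← hy, res_comp, hr, Abelian.Ext.zero_comp]
end ShortExact

lemma Vanishes.of_iso {i : ℕ} {M N : ModuleCat.{u} R} (e : M ≅ N) (h : Vanishes I i M) :
    Vanishes I i N := by
  intro s x
  obtain ⟨t, hst, hx⟩ := h s (x.comp (.mk₀ e.inv) (add_zero _))
  refine ⟨t, hst, ?_⟩
  have := congr($(hx).comp (.mk₀ e.hom) (add_zero _))
  rw [← res_comp] at this
  simpa using this

lemma vanishes_of_subsingleton {i : ℕ} (M : ModuleCat.{u} R) [Subsingleton M] :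
    Vanishes I i M := by
  intro s x
  have hid : 𝟙 M = 0 := (ModuleCat.isZero_of_subsingleton M).eq_of_src _ _
  refine ⟨s, le_rfl, ?_⟩
  rw [← x.comp_mk₀_id, hid]
  simp

lemma smul_ext_eq_zero_of_mem_pow {i t : ℕ} {M : ModuleCat.{u} R} {a : R} (ha : a ∈ I ^ t)
    (x : Abelian.Ext (ModuleCat.of R (R ⧸ I ^ t)) M i) : a • x = 0 := by
  have h0 : a • 𝟙 (ModuleCat.of R (R ⧸ I ^ t)) = 0 := by
    ext
    exact Ideal.Quotient.eq_zero_iff_mem.2 (by simpa using ha)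
  rw [← x.mk₀_id_comp, ← Abelian.Ext.smul_comp, ← Abelian.Ext.mk₀_smul, h0]
  simp

lemma Model.exists_pow_smul_eq_zero {i : ℕ} {M : ModuleCat.{u} R} {H : Type u} [AddCommGroup H]
    [Module R H] (m : Model I i M H) (y : H) : ∃ t, ∀ a ∈ I ^ t, a • y = 0 := by
  obtain ⟨t, x, rfl⟩ := m.exists_rep y
  exact ⟨t, fun a ha => by rw [← map_smul, smul_ext_eq_zero_of_mem_pow ha, map_zero]⟩

lemma Model.smul_eq_zero_of_mem_annihilator {i : ℕ} {M : ModuleCat.{u} R} {H : Type u}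
    [AddCommGroup H] [Module R H] (m : Model I i M H) {a : R}
    (ha : a ∈ Module.annihilator R M) (y : H) : a • y = 0 := by
  obtain ⟨t, x, rfl⟩ := m.exists_rep y
  have h0 : a • 𝟙 M = 0 := by
    ext z
    exact Module.mem_annihilator.1 ha z
  rw [← map_smul, Abelian.Ext.smul_eq_comp_mk₀, h0]
  simp

end localCohomology

namespace localCohomology
variable {R : Type u} [CommRing R] (I : Ideal R)

/-- The submodule of elements annihilated by a power of `I`. -/
def torsion (M : Type*) [AddCommGroup M] [Module R M] : Submodule R M where
  carrier := {y | ∃ t, ∀ a ∈ I ^ t, a • y = 0}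
  zero_mem' := ⟨0, fun _ _ => smul_zero _⟩
  add_mem' := by
    rintro x y ⟨s, hs⟩ ⟨t, ht⟩
    refine ⟨max s t, fun a ha => ?_⟩
    rw [smul_add, hs a (Ideal.pow_le_pow_right (le_max_left s t) ha),
      ht a (Ideal.pow_le_pow_right (le_max_right s t) ha), add_zero]
  smul_mem' := by
    rintro r x ⟨s, hs⟩
    exact ⟨s, fun a ha => by rw [smul_comm, hs a ha, smul_zero]⟩

variable {I}

lemma mem_torsion {M : Type*} [AddCommGroup M] [Module R M] {y : M} :
    y ∈ torsion I M ↔ ∃ t, ∀ a ∈ I ^ t, a • y = 0 := Iff.rfl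

lemma torsion_mono {J : Ideal R} (h : I ≤ J) (M : Type*) [AddCommGroup M] [Module R M] :
    torsion J M ≤ torsion I M := by
  rintro x ⟨t, ht⟩
  exact ⟨t, fun a ha => ht a (Ideal.pow_right_mono h t ha)⟩

lemma map_mem_torsion {M N : Type*} [AddCommGroup M] [Module R M] [AddCommGroup N] [Module R N]
    (f : M →ₗ[R] N) {x : M} (hx : x ∈ torsion I M) : f x ∈ torsion I N := by
  obtain ⟨t, ht⟩ := hx
  exact ⟨t, fun a ha => by rw [← map_smul, ht a ha, map_zero]⟩

lemma mem_torsion_of_map {M N : Type*} [AddCommGroup M] [Module R M] [AddCommGroup N] [Module R N]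
    (f : M →ₗ[R] N) (hf : Function.Injective f) {x : M} (hx : f x ∈ torsion I N) :
    x ∈ torsion I M := by
  obtain ⟨t, ht⟩ := hx
  exact ⟨t, fun a ha => hf (by rw [map_smul, ht a ha, map_zero])⟩

section ofElement
variable {M N : ModuleCat.{u} R} {t : ℕ}

/-- The element of `Ext^0(R ⧸ I ^ t, M)` given by an element of `M` annihilated by `I ^ t`. -/
noncomputable def ofElement (y : M) (hy : ∀ a ∈ I ^ t, a • y = 0) :
    Abelian.Ext (ModuleCat.of R (R ⧸ I ^ t)) M 0 :=
  .mk₀ (ModuleCat.ofHom (Submodule.liftQ (I ^ t) (LinearMap.toSpanSingleton R M y) hy))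

lemma exists_ofElement (x : Abelian.Ext (ModuleCat.of R (R ⧸ I ^ t)) M 0) :
    ∃ (y : M) (hy : ∀ a ∈ I ^ t, a • y = 0), x = ofElement y hy := by
  obtain ⟨f, rfl⟩ := (Abelian.Ext.mk₀_bijective _ _).2 x
  have hf : ∀ a ∈ I ^ t, a • f.hom (Submodule.Quotient.mk 1) = 0 := by
    intro a ha
    rw [← map_smul, ← Submodule.Quotient.mk_smul, (Submodule.Quotient.mk_eq_zero _).2, map_zero]
    simpa using ha
  refine ⟨f.hom (Submodule.Quotient.mk 1), hf, congrArg _ ?_⟩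
  ext
  exact (one_smul R (f.hom (Submodule.Quotient.mk 1))).symm

lemma ofElement_injective {y z : M} {hy : ∀ a ∈ I ^ t, a • y = 0}
    {hz : ∀ a ∈ I ^ t, a • z = 0} (h : ofElement y hy = ofElement z hz) : y = z := by
  have := congr(ModuleCat.Hom.hom $((Abelian.Ext.mk₀_bijective _ _).1 h)
    (Submodule.Quotient.mk 1))
  change (1 : R) • y = (1 : R) • z at this
  rwa [one_smul, one_smul] at this

lemma ofElement_zero :
    ofElement (0 : M) (fun (a : R) (_ : a ∈ I ^ t) => smul_zero a) = 0 := by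
  have h : Submodule.liftQ (I ^ t) (LinearMap.toSpanSingleton R M 0)
      (fun a _ => smul_zero a) = 0 := by
    ext
    simp
  rw [ofElement, h, ModuleCat.ofHom_zero, Abelian.Ext.mk₀_zero]

lemma ofElement_eq_zero_iff {y : M} {hy : ∀ a ∈ I ^ t, a • y = 0} :
    ofElement y hy = 0 ↔ y = 0 := by
  constructor
  · intro h
    rw [← ofElement_zero] at h
    exact ofElement_injective h
  · rintro rfl
    exact ofElement_zero

lemma res_ofElement {s : ℕ} (h : t ≤ s) (y : M) (hy : ∀ a ∈ I ^ t, a • y = 0) :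
    res I h (ofElement y hy) =
      ofElement y (fun a ha => hy a (Ideal.pow_le_pow_right h ha)) := by
  rw [res, ofElement, Abelian.Ext.mk₀_comp_mk₀]
  refine congrArg _ ?_
  ext
  rfl

lemma ofElement_comp (y : M) (hy : ∀ a ∈ I ^ t, a • y = 0) (g : M ⟶ N) :
    (ofElement y hy).comp (.mk₀ g) (add_zero 0) =
      ofElement (g.hom y) (fun a ha => by rw [← map_smul, hy a ha, map_zero]) := by
  rw [ofElement, Abelian.Ext.mk₀_comp_mk₀]
  refine congrArg _ ?_
  ext
  exact map_smul g.hom (1 : R) y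

lemma ofElement_add {y z : M} (hy : ∀ a ∈ I ^ t, a • y = 0) (hz : ∀ a ∈ I ^ t, a • z = 0) :
    ofElement (y + z) (fun a ha => by rw [smul_add, hy a ha, hz a ha, add_zero]) =
      ofElement y hy + ofElement z hz := by
  rw [ofElement, ofElement, ofElement, ← Abelian.Ext.mk₀_add]
  refine congrArg _ ?_
  ext
  exact smul_add (1 : R) y z

lemma ofElement_smul {y : M} (r : R) (hy : ∀ a ∈ I ^ t, a • y = 0) :
    ofElement (r • y) (fun a ha => by rw [smul_comm, hy a ha, smul_zero]) =
      r • ofElement y hy := by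
  rw [ofElement, ofElement, ← Abelian.Ext.mk₀_smul]
  refine congrArg _ ?_
  ext
  exact smul_comm (1 : R) r y

/-- A compatible family of linear maps on `Ext^0(R ⧸ I ^ t, M)` induces a linear map on the
`I`-torsion of `M`. -/
lemma exists_linearMap_torsion {H : Type u} [AddCommGroup H] [Module R H]
    (κ : ∀ t, Abelian.Ext (ModuleCat.of R (R ⧸ I ^ t)) M 0 →ₗ[R] H)
    (hκ : ∀ {s t : ℕ} (h : s ≤ t) (x), κ t (res I h x) = κ s x) :
    ∃ f : torsion I M →ₗ[R] H, ∀ (t : ℕ) (y : M) (hy : ∀ a ∈ I ^ t, a • y = 0),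
      f ⟨y, t, hy⟩ = κ t (ofElement y hy) := by
  have hκ' (s t : ℕ) (y : M) (hs : ∀ a ∈ I ^ s, a • y = 0) (ht : ∀ a ∈ I ^ t, a • y = 0) :
      κ s (ofElement y hs) = κ t (ofElement y ht) := by
    rw [← hκ (le_max_left s t), ← hκ (le_max_right s t), res_ofElement, res_ofElement]
  let φ (y : torsion I M) : H := κ y.2.choose (ofElement y.1 y.2.choose_spec)
  have hφ (t : ℕ) (y : torsion I M) (hy : ∀ a ∈ I ^ t, a • y.1 = 0) :
      φ y = κ t (ofElement y.1 hy) := hκ' _ _ _ _ _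
  refine ⟨⟨⟨φ, ?_⟩, ?_⟩, fun t y hy => hφ t ⟨y, t, hy⟩ hy⟩
  · rintro ⟨y, s, hy⟩ ⟨z, t, hz⟩
    have hy' : ∀ a ∈ I ^ max s t, a • y = 0 :=
      fun a ha => hy a (Ideal.pow_le_pow_right (le_max_left s t) ha)
    have hz' : ∀ a ∈ I ^ max s t, a • z = 0 :=
      fun a ha => hz a (Ideal.pow_le_pow_right (le_max_right s t) ha)
    rw [hφ (max s t) ⟨y, s, hy⟩ hy', hφ (max s t) ⟨z, t, hz⟩ hz', ← map_add, ← ofElement_add]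
    exact hφ _ _ _
  · rintro r ⟨y, s, hy⟩
    change φ _ = r • φ _
    rw [hφ s ⟨y, s, hy⟩ hy, ← map_smul, ← ofElement_smul]
    exact hφ _ _ _
end ofElement

lemma vanishes_zero_iff {M : ModuleCat.{u} R} : Vanishes I 0 M ↔ torsion I M = ⊥ := by
  rw [eq_bot_iff]
  constructor
  · rintro h y ⟨t, hy⟩
    obtain ⟨s, hs, h0⟩ := h t (ofElement y hy)
    rw [res_ofElement, ofElement_eq_zero_iff] at h0
    exact h0
  · intro h s x
    obtain ⟨y, hy, rfl⟩ := exists_ofElement x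
    exact ⟨s, le_rfl, by rw [res_ofElement, ofElement_eq_zero_iff]; exact h ⟨s, hy⟩⟩

lemma Model.exists_torsion_equiv {M : ModuleCat.{u} R} {H : Type u} [AddCommGroup H]
    [Module R H] (m : Model I 0 M H) : Nonempty (torsion I M ≃ₗ[R] H) := by
  obtain ⟨f, hf⟩ := exists_linearMap_torsion m.ι m.ι_res
  refine ⟨LinearEquiv.ofBijective f ⟨?_, ?_⟩⟩
  · rw [injective_iff_map_eq_zero]
    rintro ⟨y, t, hy⟩ h0
    rw [hf t y hy] at h0
    obtain ⟨s, hs, h1⟩ := m.exists_res_eq_zero _ h0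
    rw [res_ofElement, ofElement_eq_zero_iff] at h1
    exact Subtype.ext h1
  · intro y
    obtain ⟨t, x, rfl⟩ := m.exists_rep y
    obtain ⟨y, hy, rfl⟩ := exists_ofElement x
    exact ⟨_, hf t y hy⟩

variable (I) in
/-- The `I`-torsion submodule is the zeroth local cohomology. -/
lemma nonempty_model_torsion (M : ModuleCat.{u} R) : Nonempty (Model I 0 M (torsion I M)) := by
  obtain ⟨e⟩ := (model I 0 M).exists_torsion_equiv
  let m := model I 0 M
  refine ⟨⟨fun t => e.symm.toLinearMap ∘ₗ m.ι t, ?_, ?_, ?_⟩⟩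
  · intro s t h x
    exact congrArg e.symm (m.ι_res h x)
  · intro y
    obtain ⟨t, x, hx⟩ := m.exists_rep (e y)
    exact ⟨t, x, by rw [LinearMap.comp_apply, hx]; simp⟩
  · intro s x hx
    exact m.exists_res_eq_zero x (e.symm.map_eq_zero_iff.1 hx)

section ShortExact
variable {S : ShortComplex (ModuleCat.{u} R)} (hS : S.ShortExact)

include hS in
lemma exists_torsion_of_vanishes_one (h : Vanishes I 1 S.X₁) {y : S.X₃}
    (hy : y ∈ torsion I S.X₃) : ∃ x ∈ torsion I S.X₂, S.g.hom x = y := by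
  obtain ⟨t, hy⟩ := hy
  obtain ⟨s, hs, h0⟩ := h t ((ofElement y hy).comp hS.extClass rfl)
  rw [res_comp, res_ofElement] at h0
  obtain ⟨x, hx⟩ := Abelian.Ext.covariant_sequence_exact₃ _ hS _ rfl h0
  obtain ⟨z, hz, rfl⟩ := exists_ofElement x
  refine ⟨z, ⟨s, hz⟩, ?_⟩
  rw [ofElement_comp] at hx
  exact ofElement_injective hx

include hS in
lemma vanishes_one_of_exists_torsion (h₂ : Vanishes I 1 S.X₂)
    (h : ∀ y ∈ torsion I S.X₃, ∃ x ∈ torsion I S.X₂, S.g.hom x = y) : Vanishes I 1 S.X₁ := by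
  intro s x
  obtain ⟨t, hst, hx⟩ := h₂ s (x.comp (.mk₀ S.f) (add_zero _))
  rw [res_comp] at hx
  obtain ⟨y, hy⟩ := Abelian.Ext.covariant_sequence_exact₁ _ hS _ hx rfl
  obtain ⟨y, hy', rfl⟩ := exists_ofElement y
  obtain ⟨z, ⟨r, hz⟩, rfl⟩ := h y ⟨t, hy'⟩
  refine ⟨max r t, hst.trans (le_max_right r t), ?_⟩
  rw [← res_res I hst (le_max_right r t), ← hy, res_comp, res_ofElement,
    ← ofElement_comp z fun a ha => hz a (Ideal.pow_le_pow_right (le_max_left r t) ha),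
    Abelian.Ext.comp_assoc_of_second_deg_zero, hS.comp_extClass, Abelian.Ext.comp_zero]

include hS in
/-- The first local cohomology is the cokernel of the map on torsion submodules. -/
lemma Model.exists_torsion_surjective [Injective S.X₂] {H : Type u} [AddCommGroup H]
    [Module R H] (m : Model I 1 S.X₁ H) :
    ∃ f : torsion I S.X₃ →ₗ[R] H, Function.Surjective f ∧
      ∀ y, f y = 0 ↔ ∃ x ∈ torsion I S.X₂, S.g.hom x = y.1 := by
  obtain ⟨f, hf⟩ := exists_linearMap_torsion
    (fun t => m.ι t ∘ₗ hS.extClass.postcompOfLinear R _ (zero_add 1))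
    (fun {s t} h x => (congrArg (m.ι t) (res_comp I h x hS.extClass (zero_add 1)).symm).trans
      (m.ι_res h _))
  refine ⟨f, ?_, ?_⟩
  · intro y
    obtain ⟨t, x, rfl⟩ := m.exists_rep y
    obtain ⟨z, rfl⟩ := Abelian.Ext.covariant_sequence_exact₁ _ hS x
      (Abelian.Ext.eq_zero_of_injective _) (zero_add 1)
    obtain ⟨y, hy, rfl⟩ := exists_ofElement z
    exact ⟨_, hf t y hy⟩
  · rintro ⟨y, t, hy⟩
    rw [hf t y hy]
    constructor
    · intro h0
      obtain ⟨s, hs, h0⟩ := m.exists_res_eq_zero _ h0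
      replace h0 : res I hs ((ofElement y hy).comp hS.extClass (zero_add 1)) = 0 := h0
      rw [res_comp, res_ofElement] at h0
      obtain ⟨x, hx⟩ := Abelian.Ext.covariant_sequence_exact₃ _ hS _ rfl h0
      obtain ⟨z, hz, rfl⟩ := exists_ofElement x
      rw [ofElement_comp] at hx
      exact ⟨z, ⟨s, hz⟩, ofElement_injective hx⟩
    · rintro ⟨z, ⟨r, hz⟩, rfl⟩
      have h0 : res I (le_max_right r t)
          ((ofElement (S.g.hom z) hy).comp hS.extClass (zero_add 1)) = 0 := by
        rw [res_comp, res_ofElement,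
          ← ofElement_comp z fun a ha => hz a (Ideal.pow_le_pow_right (le_max_left r t) ha),
          Abelian.Ext.comp_assoc_of_second_deg_zero, hS.comp_extClass, Abelian.Ext.comp_zero]
      change m.ι t ((ofElement (S.g.hom z) hy).comp hS.extClass (zero_add 1)) = 0
      rw [← m.ι_res (le_max_right r t), h0, map_zero]
end ShortExact
end localCohomology

namespace localCohomology
variable {R : Type u} [CommRing R] {I : Ideal R}

lemma torsion_torsion (M : Type*) [AddCommGroup M] [Module R M] :
    torsion I (torsion I M) = ⊤ := by
  rw [eq_top_iff]
  rintro ⟨y, t, hy⟩ -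
  exact ⟨t, fun a ha => Subtype.ext (hy a ha)⟩

lemma torsion_eq_top_of_injective {M N : Type*} [AddCommGroup M] [Module R M] [AddCommGroup N]
    [Module R N] (f : M →ₗ[R] N) (hf : Function.Injective f) (h : torsion I N = ⊤) :
    torsion I M = ⊤ :=
  eq_top_iff.2 fun _ _ => mem_torsion_of_map f hf (h ▸ Submodule.mem_top)

lemma torsion_eq_top_of_surjective {M N : Type*} [AddCommGroup M] [Module R M] [AddCommGroup N]
    [Module R N] (f : M →ₗ[R] N) (hf : Function.Surjective f) (h : torsion I M = ⊤) :
    torsion I N = ⊤ := by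
  refine eq_top_iff.2 fun x _ => ?_
  obtain ⟨y, rfl⟩ := hf x
  exact map_mem_torsion f (h ▸ Submodule.mem_top)

/-- A finitely generated `I`-torsion module is annihilated by a power of `I`. -/
lemma exists_pow_smul_eq_zero_of_finite (M : Type*) [AddCommGroup M] [Module R M]
    [Module.Finite R M] (h : torsion I M = ⊤) : ∃ t, ∀ a ∈ I ^ t, ∀ y : M, a • y = 0 := by
  obtain ⟨S, hS⟩ := Module.Finite.fg_top (R := R) (M := M)
  have h' (y : M) : ∃ t, ∀ a ∈ I ^ t, a • y = 0 := (h ▸ Submodule.mem_top : y ∈ torsion I M)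
  choose t ht using h'
  refine ⟨S.sup t, fun a ha y => ?_⟩
  have hy : y ∈ Submodule.span R (S : Set M) := hS ▸ Submodule.mem_top
  induction hy using Submodule.span_induction with
  | mem x hx => exact ht x a (Ideal.pow_le_pow_right (Finset.le_sup hx) ha)
  | zero => exact smul_zero a
  | add x y _ _ hx hy => rw [smul_add, hx, hy, add_zero]
  | smul r x _ hx => rw [smul_comm, hx, smul_zero]

variable [IsNoetherianRing R]

/-- Over a Noetherian ring, the `I`-torsion of an injective module is injective. -/
lemma injective_torsion (I : Ideal R) (E : Type u) [AddCommGroup E] [Module R E]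
    [Module.Injective R E] : Module.Injective R (torsion I E) := by
  refine Module.Baer.injective fun 𝔞 f => ?_
  obtain ⟨t, ht⟩ := exists_pow_smul_eq_zero_of_finite (LinearMap.range f)
    (torsion_eq_top_of_injective (I := I) _ (Submodule.injective_subtype _) (torsion_torsion E))
  obtain ⟨k, hk⟩ := Ideal.exists_pow_inf_eq_pow_smul I 𝔞
  let K : Submodule R 𝔞 := Submodule.comap 𝔞.subtype (I ^ (t + k))
  have hK : K ≤ LinearMap.ker ((torsion I E).subtype ∘ₗ f) := by
    intro x hx
    have h1 : x.1 ∈ I ^ t • 𝔞 := by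
      have : x.1 ∈ I ^ (t + k) • ⊤ ⊓ 𝔞 := ⟨by simpa [K] using hx, x.2⟩
      rw [hk _ (Nat.le_add_left k t), Nat.add_sub_cancel] at this
      exact Submodule.smul_mono le_rfl inf_le_right this
    have h2 : I ^ t • (⊤ : Submodule R 𝔞) ≤ LinearMap.ker f := by
      rw [Submodule.smul_le]
      intro a ha y _
      rw [LinearMap.mem_ker, map_smul]
      exact congrArg Subtype.val (ht a ha ⟨f y, y, rfl⟩)
    have h3 : x ∈ I ^ t • (⊤ : Submodule R 𝔞) := by
      have h4 : Submodule.map 𝔞.subtype (I ^ t • ⊤) = I ^ t • 𝔞 := by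
        rw [Submodule.map_smul'', Submodule.map_subtype_top]
      rw [← h4] at h1
      obtain ⟨z, hz, hzx⟩ := h1
      rwa [Subtype.ext hzx] at hz
    rw [LinearMap.mem_ker, LinearMap.comp_apply, LinearMap.mem_ker.1 (h2 h3), map_zero]
  obtain ⟨g, hg⟩ := Module.Injective.out (R := R) (Q := E)
    (Submodule.mapQ K (I ^ (t + k)) 𝔞.subtype le_rfl)
    (by
      rw [← LinearMap.ker_eq_bot, Submodule.mapQ, Submodule.ker_liftQ_eq_bot]
      intro x hx
      exact (Submodule.Quotient.mk_eq_zero (I ^ (t + k))).1 hx)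
    (K.liftQ _ hK)
  have hgt (x : R) : g (Submodule.Quotient.mk x) ∈ torsion I E := by
    refine ⟨t + k, fun a ha => ?_⟩
    rw [← map_smul, ← Submodule.Quotient.mk_smul, (Submodule.Quotient.mk_eq_zero _).2, map_zero]
    exact Ideal.mul_mem_right _ _ ha
  refine ⟨(g ∘ₗ Submodule.mkQ _).codRestrict _ hgt, fun x hx => Subtype.ext ?_⟩
  exact hg (Submodule.Quotient.mk ⟨x, hx⟩)

lemma injective_of_torsion (I : Ideal R) (E : ModuleCat.{u} R) [Injective E] :
    Injective (ModuleCat.of R (torsion I E)) := by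
  have : Module.Injective R E := Module.injective_module_of_injective_object R E
  have := injective_torsion I E
  exact Module.injective_object_of_injective_module R _

lemma vanishes_succ_of_torsion_eq_top {i : ℕ} (N : ModuleCat.{u} R) (h : torsion I N = ⊤) :
    Vanishes I (i + 1) N := by
  have key (N : ModuleCat.{u} R) (h : torsion I N = ⊤) :
      ∃ S : ShortComplex (ModuleCat.{u} R), S.ShortExact ∧ S.X₁ = N ∧ Injective S.X₂ ∧
        torsion I S.X₂ = ⊤ := by
    let j : N →ₗ[R] torsion I (Injective.under N : ModuleCat R) :=
      (Injective.ι N).hom.codRestrict _ fun x => map_mem_torsion _ (h ▸ Submodule.mem_top)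
    have hj : Function.Injective j := by
      rw [LinearMap.injective_codRestrict_iff]
      exact (ModuleCat.mono_iff_injective _).1 inferInstance
    refine ⟨ModuleCat.shortComplexOfCompEqZero j (LinearMap.range j).mkQ
      (LinearMap.range_mkQ_comp j), ModuleCat.shortComplex_shortExact _
      (LinearMap.exact_map_mkQ_range j) hj (Submodule.mkQ_surjective _), rfl,
      injective_of_torsion I _, torsion_torsion _⟩
  induction i generalizing N with
  | zero =>
    obtain ⟨S, hS, rfl, _, ht⟩ := key N h
    refine vanishes_one_of_exists_torsion hS (vanishes_succ_of_injective _) fun y _ => ?_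
    obtain ⟨x, rfl⟩ := hS.moduleCat_surjective_g y
    exact ⟨x, ht ▸ Submodule.mem_top, rfl⟩
  | succ i ih =>
    obtain ⟨S, hS, rfl, _, ht⟩ := key N h
    exact Vanishes.left hS (ih _ (torsion_eq_top_of_surjective S.g.hom
      hS.moduleCat_surjective_g ht)) (vanishes_succ_of_injective _)
end localCohomology

namespace localCohomology
variable {R : Type u} [CommRing R] {I : Ideal R}

open Pointwise in
/-- If `H^i_I(M ⧸ r ^ s M)` vanishes for all `s`, where `r ∈ I` is regular on `M`, then `H^{i+1}_I(M)`
vanishes. -/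
lemma vanishes_succ_of_isSMulRegular {i : ℕ} (M : ModuleCat.{u} R) {r : R} (hr : r ∈ I)
    (hreg : IsSMulRegular M r)
    (h : ∀ s : ℕ, Vanishes I i (ModuleCat.of R (QuotSMulTop (r ^ s) M))) :
    Vanishes I (i + 1) M := by
  intro s x
  have hS := (hreg.pow s).smulShortComplex_shortExact
  obtain ⟨z, hz⟩ := Abelian.Ext.covariant_sequence_exact₁ _ hS (n₀ := i) x
    ((Abelian.Ext.smul_eq_comp_mk₀ x (r ^ s)).symm.trans
      (smul_ext_eq_zero_of_mem_pow (Ideal.pow_mem_pow hr s) x)) rfl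
  obtain ⟨t, hst, ht⟩ := h s s z
  exact ⟨t, hst, (congrArg (res I hst) hz.symm).trans ((res_comp I hst z hS.extClass rfl).trans
    ((congrArg (fun w => Abelian.Ext.comp w hS.extClass rfl) ht).trans
      (Abelian.Ext.zero_comp ..)))⟩

variable [IsNoetherianRing R]

/-- An `Ext`-class from a finitely generated module over a Noetherian ring is supported on a
finitely generated submodule. -/
lemma exists_fg_submodule_ext {i : ℕ} {X N : ModuleCat.{u} R} [Module.Finite R X]
    (x : Abelian.Ext X N i) :
    ∃ N' : Submodule R N, N'.FG ∧ ∃ x' : Abelian.Ext X (ModuleCat.of R N') i,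
      x'.comp (.mk₀ (ModuleCat.ofHom N'.subtype)) (add_zero i) = x := by
  induction i generalizing X with
  | zero =>
    obtain ⟨f, rfl⟩ := (Abelian.Ext.mk₀_bijective _ _).2 x
    refine ⟨LinearMap.range f.hom, Module.Finite.iff_fg.1 inferInstance,
      .mk₀ (ModuleCat.ofHom f.hom.rangeRestrict), ?_⟩
    rw [Abelian.Ext.mk₀_comp_mk₀]
    rfl
  | succ i ih =>
    obtain ⟨n, f, hf⟩ := Module.Finite.exists_fin' R X
    have hS := LinearMap.shortExact_shortComplexKer hf
    have : Projective f.shortComplexKer.X₂ := ModuleCat.projective_of_free (Pi.basisFun R (Fin n))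
    obtain ⟨x₁, rfl⟩ := Abelian.Ext.contravariant_sequence_exact₃ hS N x
      (Abelian.Ext.eq_zero_of_projective _) (add_comm 1 i)
    obtain ⟨N', hN', x', rfl⟩ := ih x₁
    exact ⟨N', hN', hS.extClass.comp x' (add_comm 1 i),
      Abelian.Ext.comp_assoc_of_third_deg_zero _ _ _ _⟩

lemma vanishes_of_forall_fg {i : ℕ} (N : ModuleCat.{u} R)
    (h : ∀ N' : Submodule R N, N'.FG → Vanishes I i (ModuleCat.of R N')) : Vanishes I i N := by
  intro s x
  obtain ⟨N', hN', x', rfl⟩ := exists_fg_submodule_ext x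
  obtain ⟨t, hst, ht⟩ := h N' hN' s x'
  exact ⟨t, hst, by rw [res_comp, ht, Abelian.Ext.zero_comp]⟩

/-- **Grothendieck's vanishing theorem**. -/
theorem vanishes_of_supportDim_lt (I : Ideal R) {d i : ℕ} (hi : d ≤ i) (N : ModuleCat.{u} R)
    (hN : Module.supportDim R N < d) : Vanishes I i N := by
  induction d generalizing i N with
  | zero =>
    have : Subsingleton N := by
      rw [← Module.supportDim_eq_bot_iff_subsingleton R]
      exact WithBot.lt_coe_bot.1 hN
    exact vanishes_of_subsingleton N
  | succ d ih =>
    suffices key : ∀ (P : Type u) [AddCommGroup P] [Module R P], Module.Finite R P →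
        Module.supportDim R P < ((d + 1 : ℕ) : WithBot ℕ∞) → Vanishes I i (ModuleCat.of R P) from
      vanishes_of_forall_fg N fun N' hN' => key N' (Module.Finite.iff_fg.2 hN')
        ((Module.supportDim_le_of_injective _ N'.injective_subtype).trans_lt hN)
    intro P _ _ hP
    induction hP using
      IsNoetherianRing.induction_on_isQuotientEquivQuotientPrime R with
    | subsingleton N => exact fun _ => vanishes_of_subsingleton _
    | quotient N p e =>
      intro hN
      refine Vanishes.of_iso e.symm.toModuleIso ?_
      rw [Module.supportDim_eq_of_equiv e] at hN
      obtain ⟨j, rfl⟩ : ∃ j, i = j + 1 := ⟨i - 1, by lia⟩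
      by_cases hIp : I ≤ p.1
      · refine vanishes_succ_of_torsion_eq_top _ (eq_top_iff.2 fun y _ => ⟨1, fun a ha => ?_⟩)
        rw [pow_one] at ha
        obtain ⟨y, rfl⟩ := Submodule.Quotient.mk_surjective _ y
        exact (Submodule.Quotient.mk_eq_zero _).2 (p.1.mul_mem_right y (hIp ha))
      · obtain ⟨r, hr, hrp⟩ := Set.not_subset.1 hIp
        have hreg : IsSMulRegular (R ⧸ p.1) r := by
          refine isSMulRegular_iff_right_eq_zero_of_smul.2 fun y hy => ?_
          obtain ⟨y, rfl⟩ := Submodule.Quotient.mk_surjective _ y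
          refine (Submodule.Quotient.mk_eq_zero _).2 ?_
          exact (p.2.mem_or_mem ((Submodule.Quotient.mk_eq_zero _).1 hy)).resolve_left hrp
        refine vanishes_succ_of_isSMulRegular _ hr hreg fun s => ih (by lia) _ ?_
        have h1 := Module.supportDim_quotSMulTop_succ_le_of_notMem_minimalPrimes
          (M := R ⧸ p.1) (x := r ^ s) fun _ => (hreg.pow s).notMem_of_mem_minimalPrimes
        have h2 := h1.trans_lt hN
        rw [Nat.cast_add, Nat.cast_one] at h2
        exact lt_of_add_lt_add_right h2
    | exact N₁ N₂ N₃ f g hf hg hfg h₁ h₃ =>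
      intro hN
      exact Vanishes.middle (S := ModuleCat.shortComplexOfCompEqZero f g hfg.linearMap_comp_eq_zero)
        (ModuleCat.shortComplex_shortExact _ hfg hf hg)
        (h₁ ((Module.supportDim_le_of_injective f hf).trans_lt hN))
        (h₃ ((Module.supportDim_le_of_surjective g hg).trans_lt hN))
end localCohomology

namespace localCohomology
variable {R : Type u} [CommRing R] {I J : Ideal R}

section ShortExact
variable {S : ShortComplex (ModuleCat.{u} R)} (hS : S.ShortExact) [Injective S.X₂]
include hS

/-- Dimension shifting for local cohomology. -/
lemma Model.nonempty_shift {i : ℕ} {H : Type u} [AddCommGroup H] [Module R H]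
    (m : Model I (i + 2) S.X₁ H) : Nonempty (Model I (i + 1) S.X₃ H) := by
  refine ⟨⟨fun t => m.ι t ∘ₗ hS.extClass.postcompOfLinear R _ rfl, fun {s t} h x =>
    (congrArg (m.ι t) (res_comp I h x hS.extClass rfl).symm).trans (m.ι_res h _), ?_, ?_⟩⟩
  · intro y
    obtain ⟨t, x, rfl⟩ := m.exists_rep y
    obtain ⟨z, rfl⟩ := Abelian.Ext.covariant_sequence_exact₁ _ hS x
      (Abelian.Ext.eq_zero_of_injective _) rfl
    exact ⟨t, z, rfl⟩
  · intro s x hx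
    obtain ⟨t, hst, h0⟩ := m.exists_res_eq_zero _ hx
    replace h0 : res I hst (x.comp hS.extClass rfl) = 0 := h0
    rw [res_comp] at h0
    obtain ⟨z, hz⟩ := Abelian.Ext.covariant_sequence_exact₃ _ hS _ rfl h0
    exact ⟨t, hst, by rw [← hz, z.eq_zero_of_injective, Abelian.Ext.zero_comp]⟩

lemma Model.exists_torsion_exact {H : Type u} [AddCommGroup H] [Module R H]
    (m : Model I 1 S.X₁ H) :
    ∃ f : torsion I S.X₃ →ₗ[R] H, Function.Surjective f ∧
      ∃ (j : torsion I S.X₁ →ₗ[R] torsion I S.X₂) (g : torsion I S.X₂ →ₗ[R] LinearMap.ker f),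
        Function.Injective j ∧ Function.Surjective g ∧ Function.Exact j g ∧
        ∀ x, (g x : torsion I S.X₃) = S.g.hom (x : S.X₂) := by
  obtain ⟨f, hf, hf'⟩ := m.exists_torsion_surjective hS
  let g := (S.g.hom.restrict (p := torsion I S.X₂) (q := torsion I S.X₃)
    fun _ hx => map_mem_torsion _ hx).codRestrict (LinearMap.ker f)
    fun x => (hf' _).2 ⟨x.1, x.2, rfl⟩
  have hg (x) : (g x : torsion I S.X₃).1 = S.g.hom (x : S.X₂) := rfl
  refine ⟨f, hf, S.f.hom.restrict fun _ hx => map_mem_torsion _ hx, g, ?_, ?_, ?_, hg⟩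
  · intro x y hxy
    exact Subtype.ext (hS.moduleCat_injective_f congr(($hxy).1))
  · rintro ⟨y, hy⟩
    obtain ⟨x, hx, hxy⟩ := (hf' y).1 hy
    exact ⟨⟨x, hx⟩, Subtype.ext (Subtype.ext hxy)⟩
  · intro x
    constructor
    · intro hx
      have h0 : S.g.hom x.1 = 0 := congr(($hx).1.1)
      obtain ⟨z, hz⟩ := ((ShortComplex.ShortExact.moduleCat_exact_iff_function_exact _).1
        hS.exact x.1).1 h0
      exact ⟨⟨z, mem_torsion_of_map S.f.hom hS.moduleCat_injective_f (hz ▸ x.2)⟩, Subtype.ext hz⟩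
    · rintro ⟨z, rfl⟩
      exact Subtype.ext (Subtype.ext congr(ModuleCat.Hom.hom $(S.zero) z.1))
end ShortExact

/-- If `I ≤ J` and `H^p_J(H^q_I(M)) = 0` whenever `p + q = n`, then `H^n_J(M) = 0`. -/
theorem vanishes_of_forall_model [IsNoetherianRing R] (hIJ : I ≤ J) (n : ℕ) (M : ModuleCat.{u} R)
    (h : ∀ p q, p + q = n → ∃ H : ModuleCat.{u} R, Nonempty (Model I q M H) ∧ Vanishes J p H) :
    Vanishes J n M := by
  have hΓ (p : ℕ) (M : ModuleCat.{u} R)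
      (h : ∃ H : ModuleCat.{u} R, Nonempty (Model I 0 M H) ∧ Vanishes J p H) :
      Vanishes J p (ModuleCat.of R (torsion I M)) := by
    obtain ⟨H, ⟨m⟩, hH⟩ := h
    obtain ⟨e⟩ := m.exists_torsion_equiv
    exact hH.of_iso e.symm.toModuleIso
  have key (M : ModuleCat.{u} R) : ∃ S : ShortComplex (ModuleCat.{u} R),
      S.ShortExact ∧ S.X₁ = M ∧ Injective S.X₂ :=
    ⟨ShortComplex.mk (Injective.ι M) (Limits.cokernel.π _) (Limits.cokernel.condition _),
      { exact := ShortComplex.exact_cokernel _ }, rfl, inferInstanceAs (Injective (Injective.under M))⟩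
  induction n generalizing M with
  | zero =>
    have h0 := hΓ 0 M (h 0 0 rfl)
    rw [vanishes_zero_iff, eq_bot_iff] at h0 ⊢
    intro y hy
    have : (⟨y, torsion_mono hIJ M hy⟩ : torsion I M) ∈ torsion J (torsion I M) :=
      mem_torsion_of_map (Submodule.subtype _) (Submodule.injective_subtype _) hy
    exact congrArg Subtype.val (h0 this)
  | succ n ih =>
    obtain ⟨S, hS, rfl, _⟩ := key M
    obtain ⟨H, ⟨m⟩, hH⟩ := h n 1 rfl
    obtain ⟨f, hf, j, g, hj, hg, hjg, hgS⟩ := m.exists_torsion_exact hS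
    let T := ModuleCat.shortComplexOfCompEqZero j g hjg.linearMap_comp_eq_zero
    have hT : T.ShortExact := ModuleCat.shortComplex_shortExact _ hjg hj hg
    have h₁ : Vanishes J (n + 1) T.X₁ := hΓ (n + 1) S.X₁ (h _ 0 rfl)
    cases n with
    | zero =>
      refine vanishes_one_of_exists_torsion hS (vanishes_succ_of_injective _) fun y hy => ?_
      rw [vanishes_zero_iff, eq_bot_iff] at hH
      let y' : torsion I S.X₃ := ⟨y, torsion_mono hIJ _ hy⟩
      have hy' : y' ∈ torsion J (torsion I S.X₃) :=
        mem_torsion_of_map (Submodule.subtype _) (Submodule.injective_subtype _) hy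
      let y'' : LinearMap.ker f := ⟨y', hH (map_mem_torsion f hy')⟩
      have hy'' : y'' ∈ torsion J (LinearMap.ker f) :=
        mem_torsion_of_map (Submodule.subtype _) (Submodule.injective_subtype _) hy'
      obtain ⟨x, hx, hxy⟩ := exists_torsion_of_vanishes_one hT h₁ hy''
      exact ⟨x.1, map_mem_torsion (Submodule.subtype _) hx, (hgS x).symm.trans congr(($hxy).1.1)⟩
    | succ n =>
      refine Vanishes.left hS (ih _ fun p q hpq => ?_) (vanishes_succ_of_injective _)
      cases q with
      | zero =>
        obtain rfl : p = n + 1 := hpq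
        refine ⟨ModuleCat.of R (torsion I S.X₃), nonempty_model_torsion I _, ?_⟩
        have : Injective T.X₂ := injective_of_torsion I S.X₂
        exact Vanishes.middle (LinearMap.shortExact_shortComplexKer hf)
          (Vanishes.right hT h₁ (vanishes_succ_of_injective _)) hH
      | succ q =>
        obtain ⟨H, ⟨m⟩, hH⟩ := h p (q + 2) (by lia)
        exact ⟨H, m.nonempty_shift hS, hH⟩
end localCohomology

namespace localCohomology
variable {R : Type u} [CommRing R]

lemma Model.supportDim_le {I : Ideal R} {i : ℕ} {M : ModuleCat.{u} R} {H : Type u}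
    [AddCommGroup H] [Module R H] (m : Model I i M H) :
    Module.supportDim R H ≤ ringKrullDim (R ⧸ (I + Module.annihilator R M)) := by
  rw [ringKrullDim_quotient]
  have hsub : Module.support R H ⊆
      PrimeSpectrum.zeroLocus ((I + Module.annihilator R M : Ideal R) : Set R) := by
    intro p hp
    obtain ⟨y, hy⟩ := Module.mem_support_iff'.1 hp
    refine (sup_le (fun a ha => ?_) fun a ha => ?_ : I + Module.annihilator R M ≤ p.asIdeal)
    · obtain ⟨t, ht⟩ := m.exists_pow_smul_eq_zero y
      by_contra hap
      exact hy (a ^ t) (fun h => hap (p.2.mem_of_pow_mem t h)) (ht _ (Ideal.pow_mem_pow ha t))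
    · by_contra hap
      exact hy a hap (m.smul_eq_zero_of_mem_annihilator ha y)
  exact Order.krullDim_le_of_strictMono (fun p => ⟨p.1, hsub p.2⟩) fun _ _ h => h

lemma torsion_maximalIdeal_eq_top [IsNoetherianRing R] [IsLocalRing R] (H : Type*) [AddCommGroup H] [Module R H]
    [IsArtinian R H] : torsion (IsLocalRing.maximalIdeal R) H = ⊤ := by
  set 𝔪 := IsLocalRing.maximalIdeal R
  refine eq_top_iff.2 fun y _ => ?_
  let N := Submodule.span R {y}
  obtain ⟨t, ht⟩ := IsArtinian.monotone_stabilizes (R := R) (M := H)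
    ⟨fun t => OrderDual.toDual (𝔪 ^ t • N),
      fun s t h => Submodule.smul_mono_left (Ideal.pow_le_pow_right h)⟩
  have h0 : 𝔪 ^ t • N = ⊥ := by
    refine Submodule.eq_bot_of_le_smul_of_le_jacobson_bot 𝔪 _ ?_ ?_
      (IsLocalRing.maximalIdeal_le_jacobson _)
    · exact Submodule.FG.smul (IsNoetherian.noetherian _) (Submodule.fg_span_singleton y)
    · rw [← Submodule.mul_smul, ← pow_succ']
      exact le_of_eq (ht (t + 1) t.le_succ)
  refine ⟨t, fun a ha => ?_⟩
  rw [← Submodule.mem_bot R, ← h0]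
  exact Submodule.smul_mem_smul ha (Submodule.mem_span_singleton_self y)
end localCohomology

open localCohomology in
/-- over a Noetherian local ring, if `M` has Krull dimension `n` with
`H^n_m(M)` nonzero and Artinian, `dim (R/(I + Ann M)) = 2`, and `H^{cd(I,M)}_I(M)` is
Artinian, then either `cd(I,M) = n`, or `cd(I,M) = n - 1` and `H^2_m(H^{n-2}_I(M)) ≠ 0`. -/
theorem cd_eq_dim_or_cd_eq_dim_sub_one_of_isArtinian_top_localCohomology
    (R : Type u) [CommRing R] [IsNoetherianRing R] [IsLocalRing R]
    (M : ModuleCat.{u} R) (n : ℕ)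
    (hn : Order.krullDim (Module.support R M) = (n : WithBot ℕ∞))
    (hne : Nontrivial ((localCohomology (IsLocalRing.maximalIdeal R) n).obj M))
    (hart : IsArtinian R ((localCohomology (IsLocalRing.maximalIdeal R) n).obj M))
    (I : Ideal R)
    (hd : ringKrullDim (R ⧸ (I + Module.annihilator R M)) = (2 : WithBot ℕ∞))
    (c : ℕ) (hc : cohomologicalDimension I M = (c : ℕ∞))
    (hartc : IsArtinian R ((localCohomology I c).obj M)) :
    c = n ∨ (c = n - 1 ∧
      Nontrivial ((localCohomology (IsLocalRing.maximalIdeal R) 2).obj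
        ((localCohomology I (n - 2)).obj M))) := by
  set 𝔪 := IsLocalRing.maximalIdeal R
  have hI : I ≤ 𝔪 := by
    have hne : I + Module.annihilator R M ≠ ⊤ := by
      intro h
      have : Subsingleton (R ⧸ (I + Module.annihilator R M)) :=
        Ideal.Quotient.subsingleton_iff.2 h
      rw [ringKrullDim_eq_bot_of_subsingleton] at hd
      exact absurd hd (by decide)
    exact le_sup_left.trans (IsLocalRing.le_maximalIdeal hne)
  have hcn : c ≤ n := by
    rw [← Nat.cast_le (α := ℕ∞), ← hc]
    refine sSup_le ?_
    rintro _ ⟨i, rfl, hi⟩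
    rw [nontrivial_iff_not_vanishes] at hi
    by_contra! hni
    refine hi (vanishes_of_supportDim_lt I (d := n + 1) (by exact_mod_cast hni) M ?_)
    rw [Module.supportDim, hn]
    exact_mod_cast n.lt_succ_self
  have hq {q : ℕ} (hq : c < q) : Vanishes I q M := by
    by_contra h
    rw [← nontrivial_iff_not_vanishes] at h
    have : (q : ℕ∞) ≤ c := hc ▸ le_sSup ⟨q, rfl, h⟩
    exact hq.not_ge (by exact_mod_cast this)
  by_contra! hcon
  obtain ⟨hc1, hc2⟩ := hcon
  refine nontrivial_iff_not_vanishes.1 hne (vanishes_of_forall_model hI n M fun p q hpq =>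
    ⟨(localCohomology I q).obj M, ⟨model I q M⟩, ?_⟩)
  obtain h | rfl | h := lt_trichotomy c q
  · have := (model I q M).subsingleton_iff.2 (hq h)
    exact vanishes_of_subsingleton _
  · obtain ⟨p, rfl⟩ : ∃ j, p = j + 1 := ⟨p - 1, by lia⟩
    exact vanishes_succ_of_torsion_eq_top _ (torsion_maximalIdeal_eq_top _)
  · obtain hp | hp : p = 2 ∨ 3 ≤ p := by lia
    · obtain rfl : q = n - 2 := by lia
      subst hp
      have := hc2 (by lia)
      rwa [← not_nontrivial_iff_subsingleton, nontrivial_iff_not_vanishes, not_not] at this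
    · refine vanishes_of_supportDim_lt 𝔪 hp _ (((model I q M).supportDim_le.trans_eq hd).trans_lt ?_)
      exact_mod_cast Nat.lt_succ_self 2
end
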